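/- Let 0 < p < ∞ and let ω be a radial weight. Then the following holds if and only if ω ∈ D = D̂ ∩ Ď: ω̃ is a weight and there exists a constant C ≥ 1 such that, for every analytic f on 𝔻 with Im f(0) = 0, the three quantities ‖f‖_{A^p_ω}^p, ∫_0^1 ( sup_{0<s<r} M_p^p(s, Re f) ) ω̃(r) dr, and ∫_0^1 ( sup_{0<s<r} M_p^p(s, Re f) ) ω(r) dr are pairwise comparable with constant C. -/

import Mathlib

/-!
Sufficiency. Put `rₙ = 1 - 2⁻ⁿ`. When `ω ∈ D`, summation over the dyadic annuli compares `∫₀¹ F ω`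
and `∫₀¹ F ω̃`, for every increasing `F ≥ 0`, with `∑ₙ F(rₙ) ω̂(rₙ)`: `D̂` allows a shift of the
index, and `Ď` makes `ω̂(rₙ)` a telescoping sum up to constants. It remains to replace `|f|` by
`|Re f|`. The Borel–Carathéodory inequality and the Hardy–Littlewood sub-mean value property of
`|Re f|^p` (valid for all `p > 0`) bound the increment of `f` between consecutive dyadic circles by
means of `Re f` on slightly larger circles, so that `M_p^p(rₙ, f)` is at most a convolution of
these means with a geometric sequence of ratio arbitrarily close to `1`. The geometric decay of
`ω̂(rₙ)` given by `Ď` absorbs that convolution.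

Necessity. For `f(z) = zⁿ` the two integrals are, up to a common factor, the moments of order
`x = np` of `ω` and `ω̃`. Integration by parts and Bernoulli's inequality turn their comparability
into `M_ω(x) ≤ C M_ω(qx)` with some `q > 1`; iterating this and splitting the integral at `1 - 1/x`
gives `M_ω(x) ≤ A ω̂(1 - 1/x)`, hence `ω ∈ D̂`. On the other hand, the moment of `ω̃` is at least
`e⁻² ω̂(b) log (1 / (x (1 - b)))`, so `ω̂(b) ≤ ω̂(1 - 1/x) / 2` once `1 - b` is a small enough
multiple of `1 / x`, which is `Ď`.
-/

open MeasureTheory Set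

/-- Tail integral `ω̂(r) = ∫_r^1 ω(s) ds`. -/
noncomputable def tailInt (ω : ℝ → ℝ) (r : ℝ) : ℝ := ∫ s in r..1, ω s

/-- A radial weight: nonnegative, integrable on `[0,1)`, with positive tails. -/
def RadialWeight (ω : ℝ → ℝ) : Prop :=
  (∀ r ∈ Set.Ico (0:ℝ) 1, 0 ≤ ω r) ∧ MeasureTheory.IntegrableOn ω (Set.Ico 0 1) ∧
    ∀ r ∈ Set.Ico (0:ℝ) 1, 0 < tailInt ω r

/-- The class `D̂` of upper doubling weights. -/
def Dhat (ω : ℝ → ℝ) : Prop :=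
  ∃ C : ℝ, 1 ≤ C ∧ ∀ r ∈ Set.Ico (0:ℝ) 1, tailInt ω r ≤ C * tailInt ω ((1 + r) / 2)

/-- The class `Ď`. -/
def Dcheck (ω : ℝ → ℝ) : Prop :=
  ∃ K C : ℝ, 1 < K ∧ 1 < C ∧ ∀ r ∈ Set.Ico (0:ℝ) 1,
    C * tailInt ω (1 - (1 - r) / K) ≤ tailInt ω r

/-- The associated weight `ω̃(r) = ω̂(r)/(1-r)`. -/
noncomputable def assocW (ω : ℝ → ℝ) (r : ℝ) : ℝ := tailInt ω r / (1 - r)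

/-- `‖f‖_{A^p_ω}^p = ∫_𝔻 |f|^p ω dA`, with `dA` the normalized area measure. -/
noncomputable def ApNorm (p : ℝ) (ω : ℝ → ℝ) (f : ℂ → ℂ) : ℝ :=
  Real.pi⁻¹ * ∫ z in Metric.ball (0:ℂ) 1, ‖f z‖ ^ p * ω ‖z‖

/-- `‖Re f‖_{L^p_ω}^p = ∫_𝔻 |Re f|^p ω dA`. -/
noncomputable def LpReNorm (p : ℝ) (ω : ℝ → ℝ) (f : ℂ → ℂ) : ℝ :=
  Real.pi⁻¹ * ∫ z in Metric.ball (0:ℂ) 1, |(f z).re| ^ p * ω ‖z‖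

/-- `M_p^p(s, Re f)`, the `p`-th power of the `p`-mean of `Re f` on the circle of radius `s`. -/
noncomputable def Mpp (p : ℝ) (f : ℂ → ℂ) (s : ℝ) : ℝ :=
  (2 * Real.pi)⁻¹ * ∫ θ in (0:ℝ)..(2 * Real.pi),
    |(f ((s : ℂ) * Complex.exp ((θ : ℂ) * Complex.I))).re| ^ p

/-- `sup_{0<s<r} M_p^p(s, Re f)`. -/
noncomputable def supMpp (p : ℝ) (f : ℂ → ℂ) (r : ℝ) : ℝ :=
  sSup ((fun s => Mpp p f s) '' Set.Ioo (0:ℝ) r)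

open Metric Filter Topology
open scoped ENNReal NNReal

/-! ### Circle averages of `|f|^p` -/

section CircleAverage

theorem circleMap_add_arg_of_norm_eq_one {ζ : ℂ} (hζ : ‖ζ‖ = 1) (c : ℂ) (R θ : ℝ) :
    circleMap (ζ * c) R (θ + ζ.arg) = ζ * circleMap c R θ := by
  have hexp : Complex.exp (ζ.arg * Complex.I) = ζ := by
    simpa [hζ] using Complex.norm_mul_exp_arg_mul_I ζ
  rw [circleMap, circleMap, mul_add, Complex.ofReal_add, add_mul, Complex.exp_add, hexp]
  ring

theorem circleMap_zero_norm_add_arg (z : ℂ) (θ : ℝ) :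
    circleMap 0 ‖z‖ (θ + z.arg) = circleMap 0 1 θ * z := by
  conv_rhs => rw [← Complex.norm_mul_exp_arg_mul_I z]
  rw [circleMap, circleMap, Complex.ofReal_add, add_mul, Complex.exp_add]
  push_cast
  ring

variable {E : Type*} [NormedAddCommGroup E] [NormedSpace ℝ E]

theorem circleAverage_comp_mul_left {ζ : ℂ} (hζ : ‖ζ‖ = 1) (v : ℂ → E) (c : ℂ) (R : ℝ) :
    Real.circleAverage (fun z => v (ζ * z)) c R = Real.circleAverage v (ζ * c) R := by
  rw [Real.circleAverage_eq_integral_add ζ.arg (c := ζ * c)]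
  simp only [Real.circleAverage_def, circleMap_add_arg_of_norm_eq_one hζ]

theorem circleAverage_comp_mul_right (v : ℂ → E) (z : ℂ) :
    Real.circleAverage (fun ζ => v (ζ * z)) 0 1 = Real.circleAverage v 0 ‖z‖ := by
  rw [Real.circleAverage_eq_integral_add z.arg (f := v) (R := ‖z‖)]
  simp only [Real.circleAverage_def, circleMap_zero_norm_add_arg]

theorem circleAverage_swap {F : ℂ → ℂ → E} (hF : Continuous (Function.uncurry F))
    (c c' : ℂ) (R R' : ℝ) :
    Real.circleAverage (fun z => Real.circleAverage (F z) c' R') c R =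
      Real.circleAverage (fun w => Real.circleAverage (fun z => F z w) c R) c' R' := by
  have hcont : Continuous
      (Function.uncurry fun θ φ : ℝ => F (circleMap c R θ) (circleMap c' R' φ)) :=
    hF.comp (((continuous_circleMap c R).comp continuous_fst).prodMk
      ((continuous_circleMap c' R').comp continuous_snd))
  simp only [Real.circleAverage_def, intervalIntegral.integral_smul]
  congr 2
  simp only [intervalIntegral.integral_of_le Real.two_pi_pos.le]
  refine integral_integral_swap ?_
  rw [Measure.prod_restrict]
  exact (hcont.continuousOn.integrableOn_compact (isCompact_Icc.prod isCompact_Icc)).mono_set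
    (prod_mono Ioc_subset_Icc_self Ioc_subset_Icc_self)

end CircleAverage

theorem circleAverage_const_add_const_mul {v : ℂ → ℝ} {c : ℂ} {R : ℝ} (a b : ℝ)
    (hv : CircleIntegrable v c R) :
    Real.circleAverage (fun z => a + b * v z) c R = a + b * Real.circleAverage v c R := by
  have hadd := Real.circleAverage_fun_add (circleIntegrable_const a c R) (hv.const_smul (a := b))
  simp only [Pi.smul_apply, smul_eq_mul] at hadd
  rw [hadd, Real.circleAverage_const]
  congr 1
  exact Real.circleAverage_fun_smul (a := b)

theorem log_norm_le_circleAverage_log_norm {f : ℂ → ℂ} {c : ℂ} {R : ℝ} (hR : 0 < R)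
    (hf : AnalyticOnNhd ℂ f (closedBall c R)) (hfc : f c ≠ 0) :
    Real.log ‖f c‖ ≤ Real.circleAverage (fun z => Real.log ‖f z‖) c R := by
  rw [← abs_of_pos hR] at hf
  rw [AnalyticOnNhd.circleAverage_log_norm hR.ne' hf hfc]
  refine le_add_of_nonneg_left (finsum_nonneg fun u => ?_)
  by_cases hu : u ∈ closedBall c |R|
  · refine mul_nonneg (by exact_mod_cast MeromorphicOn.AnalyticOnNhd.divisor_nonneg hf u) ?_
    rcases eq_or_ne c u with rfl | huc
    · simp
    · rw [abs_of_pos hR, mem_closedBall, dist_comm, dist_eq_norm] at hu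
      have : 0 < ‖c - u‖ := norm_pos_iff.2 (sub_ne_zero.2 huc)
      exact Real.log_nonneg (by rwa [← div_eq_mul_inv, one_le_div this])
  · rw [Function.locallyFinsuppWithin.apply_eq_zero_of_notMem _ hu]
    simp

theorem tangent_exp_le_norm_rpow {p a : ℝ} (L : ℝ) (ha : a ≠ 0) :
    Real.exp (p * L) * (1 + p * (Real.log |a| - L)) ≤ |a| ^ p := by
  calc Real.exp (p * L) * (1 + p * (Real.log |a| - L))
      ≤ Real.exp (p * L) * Real.exp (p * (Real.log |a| - L)) := by
        gcongr
        linarith [Real.add_one_le_exp (p * (Real.log |a| - L))]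
    _ = |a| ^ p := by
        rw [← Real.exp_add, Real.rpow_def_of_pos (abs_pos.2 ha)]
        ring_nf

/-- Jensen's formula bounds `log |f c|` by the circle average of `log |f|`, and the tangent line of
`exp` at `p log |f c|` turns this into a bound for `|f c|^p`. -/
theorem norm_rpow_le_circleAverage {p : ℝ} (hp : 0 < p) {f : ℂ → ℂ} {c : ℂ} {R : ℝ} (hR : 0 < R)
    (hf : AnalyticOnNhd ℂ f (closedBall c R)) :
    ‖f c‖ ^ p ≤ Real.circleAverage (fun z => ‖f z‖ ^ p) c R := by
  rcases eq_or_ne (f c) 0 with hfc | hfc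
  · rw [hfc, norm_zero, Real.zero_rpow hp.ne']
    exact Real.circleAverage_nonneg_of_nonneg fun z _ => by positivity
  have hf' : AnalyticOnNhd ℂ f (sphere c |R|) := by
    rw [abs_of_pos hR]
    exact hf.mono sphere_subset_closedBall
  set L := Real.log ‖f c‖
  set m := ‖f c‖ ^ p with hm
  have hexp : Real.exp (p * L) = m := by
    rw [hm, Real.rpow_def_of_pos (norm_pos_iff.2 hfc), mul_comm]
  -- The junk value `log 0 = 0` breaks the tangent bound at the zeros of `f`, which are negligible.
  classical
  let g : ℂ → ℝ := fun z => if f z = 0 then 0 else m * (1 + p * (Real.log ‖f z‖ - L))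
  have hcod : (fun z => m * (1 - p * L) + m * p * Real.log ‖f z‖)
      =ᶠ[codiscreteWithin (sphere c |R|)] g := by
    have hne := AnalyticOnNhd.preimage_zero_mem_codiscreteWithin hf hfc
      (mem_closedBall_self hR.le) (isConnected_closedBall hR.le)
    rw [abs_of_pos hR]
    filter_upwards [codiscreteWithin_mono sphere_subset_closedBall hne] with z hz
    simp only [g, if_neg (show f z ≠ 0 from hz)]
    ring
  have hlog : CircleIntegrable (fun z => Real.log ‖f z‖) c R :=
    MeromorphicOn.circleIntegrable_log_norm hf'.meromorphicOn
  have hg_le : ∀ z, g z ≤ ‖f z‖ ^ p := fun z => by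
    by_cases hz : f z = 0
    · simp [g, hz, hp.ne']
    · simpa [g, hz, hexp] using tangent_exp_le_norm_rpow (p := p) L (norm_ne_zero_iff.2 hz)
  have hlin := (circleIntegrable_const (m * (1 - p * L)) c R).add (hlog.const_smul (a := m * p))
  calc m ≤ m * (1 - p * L) + m * p * Real.circleAverage (fun z => Real.log ‖f z‖) c R := by
        have : 0 ≤ m * p := by positivity
        nlinarith [mul_le_mul_of_nonneg_left (log_norm_le_circleAverage_log_norm hR hf hfc) this]
    _ = Real.circleAverage (fun z => m * (1 - p * L) + m * p * Real.log ‖f z‖) c R := by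
        rw [circleAverage_const_add_const_mul _ _ hlog]
    _ = Real.circleAverage g c R := Real.circleAverage_congr_codiscreteWithin hcod hR.ne'
    _ ≤ Real.circleAverage (fun z => ‖f z‖ ^ p) c R :=
        Real.circleAverage_mono (hlin.congr_codiscreteWithin hcod)
          ((hf'.continuousOn.norm.rpow_const fun _ _ => Or.inr hp.le).circleIntegrable')
          fun z _ => hg_le z

theorem norm_circleMap_ofReal_le {ρ r : ℝ} (hρ : ρ ∈ Icc 0 r) (θ : ℝ) :
    ‖circleMap (ρ : ℂ) (r - ρ) θ‖ ≤ r := by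
  have h := norm_add_le (ρ : ℂ) (circleMap 0 (r - ρ) θ)
  rw [norm_circleMap_zero, Complex.norm_real, Real.norm_of_nonneg hρ.1,
    abs_of_nonneg (sub_nonneg.2 hρ.2)] at h
  simpa [circleMap] using h

/-- The maximum principle for a radial function: if `ρ < r` is the largest radius at which `g` is
maximal on `[0, r]`, then the circle about `ρ` that is internally tangent to the circle of radius
`r` contradicts the sub-mean-value property. -/
theorem le_of_norm_submean {g : ℝ → ℝ} (hg : Continuous g) {s r : ℝ} (hs : 0 ≤ s) (hsr : s ≤ r)
    (hsub : ∀ (c : ℂ) (ε : ℝ), 0 < ε → closedBall c ε ⊆ closedBall 0 r →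
      g ‖c‖ ≤ Real.circleAverage (fun z => g ‖z‖) c ε) :
    g s ≤ g r := by
  have hr : 0 ≤ r := hs.trans hsr
  obtain ⟨t, ht, hmax⟩ := isCompact_Icc.exists_isMaxOn (nonempty_Icc.2 hr) hg.continuousOn
  obtain ⟨ρ, ⟨hρ, hgρ⟩, hρ_max⟩ := (isCompact_Icc.inter_right
    (isClosed_singleton.preimage hg) :
      IsCompact (Icc 0 r ∩ g ⁻¹' {g t})).exists_isGreatest ⟨t, ht, rfl⟩
  replace hgρ : g ρ = g t := hgρ
  suffices hρr : ρ = r by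
    rw [← hρr, hgρ]
    exact hmax ⟨hs, hsr⟩
  by_contra hne
  have hlt : ρ < r := hρ.2.lt_of_ne hne
  have hnorm : ‖(ρ : ℂ)‖ = ρ := by rw [Complex.norm_real, Real.norm_of_nonneg hρ.1]
  have hgr : g r < g t :=
    (hmax ⟨hr, le_rfl⟩).lt_of_ne fun h => (hρ_max ⟨⟨hr, le_rfl⟩, h⟩).not_gt hlt
  have hmean := hsub ρ (r - ρ) (sub_pos.2 hlt)
    (closedBall_subset_closedBall' (by rw [dist_zero_right, hnorm]; linarith))
  have hint : ∫ θ in (0 : ℝ)..2 * Real.pi, g ‖circleMap (ρ : ℂ) (r - ρ) θ‖ <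
      ∫ _ in (0 : ℝ)..2 * Real.pi, g t := by
    refine intervalIntegral.integral_lt_integral_of_continuousOn_of_le_of_exists_lt
      Real.two_pi_pos (hg.comp (continuous_circleMap _ _).norm).continuousOn continuousOn_const
      (fun θ _ => hmax ⟨norm_nonneg _, norm_circleMap_ofReal_le hρ θ⟩)
      ⟨0, ⟨le_rfl, Real.two_pi_pos.le⟩, ?_⟩
    simpa [circleMap, abs_of_nonneg hr] using hgr
  rw [hnorm, hgρ, Real.circleAverage_def, smul_eq_mul, le_inv_mul_iff₀ Real.two_pi_pos] at hmean
  rw [intervalIntegral.integral_const, sub_zero, smul_eq_mul] at hint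
  exact hmean.not_gt hint

/-- Averaging `v` over rotations gives a radial function which inherits the sub-mean-value
property. -/
theorem circleAverage_mono_of_submean {v : ℂ → ℝ} (hv : Continuous v) {s r : ℝ} (hs : 0 ≤ s)
    (hsr : s ≤ r)
    (hsub : ∀ (c : ℂ) (ε : ℝ), 0 < ε → closedBall c ε ⊆ closedBall 0 r →
      v c ≤ Real.circleAverage v c ε) :
    Real.circleAverage v 0 s ≤ Real.circleAverage v 0 r := by
  refine le_of_norm_submean (g := Real.circleAverage v 0) (Real.Continuous.circleAverage hv) hs hsr
    fun c ε hε hball => ?_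
  have hrot : ∀ ζ ∈ sphere (0 : ℂ) |1|,
      v (ζ * c) ≤ Real.circleAverage (fun w => v (ζ * w)) c ε := by
    intro ζ hζ
    have hζ1 : ‖ζ‖ = 1 := by simpa using hζ
    rw [circleAverage_comp_mul_left hζ1]
    refine hsub _ _ hε fun w hw => ?_
    have hζ0 : ζ ≠ 0 := norm_ne_zero_iff.1 (by simp [hζ1])
    have : ζ⁻¹ * w ∈ closedBall c ε := by
      rw [mem_closedBall, dist_eq_norm] at hw ⊢
      rwa [show ζ⁻¹ * w - c = ζ⁻¹ * (w - ζ * c) by field_simp, norm_mul, norm_inv, hζ1, inv_one,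
        one_mul]
    simpa [hζ1] using hball this
  have hcont : Continuous (Function.uncurry fun ζ w : ℂ => v (ζ * w)) := by fun_prop
  have hcont' : Continuous fun ζ => Real.circleAverage (fun w => v (ζ * w)) c ε := by
    have hint : Continuous fun ζ => ∫ θ in (0 : ℝ)..2 * Real.pi, v (ζ * circleMap c ε θ) :=
      intervalIntegral.continuous_parametric_intervalIntegral_of_continuous' (by fun_prop) _ _
    exact hint.const_smul (2 * Real.pi)⁻¹
  calc Real.circleAverage v 0 ‖c‖
      = Real.circleAverage (fun ζ => v (ζ * c)) 0 1 := (circleAverage_comp_mul_right v c).symm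
    _ ≤ Real.circleAverage (fun ζ => Real.circleAverage (fun w => v (ζ * w)) c ε) 0 1 :=
        Real.circleAverage_mono (hv.comp (continuous_mul_const c)).continuousOn.circleIntegrable'
          hcont'.continuousOn.circleIntegrable' hrot
    _ = Real.circleAverage (fun w => Real.circleAverage v 0 ‖w‖) c ε := by
        simp only [circleAverage_swap hcont, circleAverage_comp_mul_right]

/-- The mean of an `ℝ≥0∞`-valued function over the circle of centre `c` and radius `R`: the
counterpart of `Real.circleAverage` for the Lebesgue integral. -/
noncomputable def circleLAverage (F : ℂ → ℝ≥0∞) (c : ℂ) (R : ℝ) : ℝ≥0∞ :=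
  ⨍⁻ θ in Ioc 0 (2 * Real.pi), F (circleMap c R θ) ∂volume

section CircleLAverage

theorem setLIntegral_Ioc_eq_of_periodic {F : ℝ → ℝ≥0∞} {T : ℝ} (hF : Function.Periodic F T)
    (hT : 0 < T) (a b : ℝ) :
    ∫⁻ θ in Ioc a (a + T), F θ = ∫⁻ θ in Ioc b (b + T), F θ := by
  refine (isAddFundamentalDomain_Ioc hT a).setLIntegral_eq (isAddFundamentalDomain_Ioc hT b) F ?_
  rintro ⟨g, hg⟩ x
  obtain ⟨n, rfl⟩ := AddSubgroup.mem_zmultiples_iff.1 hg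
  rw [AddSubgroup.mk_vadd, vadd_eq_add, add_comm, hF.zsmul n x]

theorem setLIntegral_Ioc_circleMap (F : ℂ → ℝ≥0∞) (c : ℂ) (R a : ℝ) :
    ∫⁻ θ in Ioc a (a + 2 * Real.pi), F (circleMap c R θ) =
      ENNReal.ofReal (2 * Real.pi) * circleLAverage F c R := by
  have hper : Function.Periodic (fun θ => F (circleMap c R θ)) (2 * Real.pi) := fun θ => by
    simp only [periodic_circleMap c R θ]
  rw [setLIntegral_Ioc_eq_of_periodic hper Real.two_pi_pos a 0, zero_add, circleLAverage,
    ← measure_mul_setLAverage _ measure_Ioc_lt_top.ne, Real.volume_Ioc, sub_zero]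

theorem ofReal_two_pi_mul_circleLAverage (F : ℂ → ℝ≥0∞) (c : ℂ) (R : ℝ) :
    ENNReal.ofReal (2 * Real.pi) * circleLAverage F c R =
      ∫⁻ θ in Ioc 0 (2 * Real.pi), F (circleMap c R θ) := by
  rw [← setLIntegral_Ioc_circleMap F c R 0, zero_add]

theorem circleLAverage_eq_mul_lintegral (F : ℂ → ℝ≥0∞) (c : ℂ) (R : ℝ) :
    circleLAverage F c R =
      (ENNReal.ofReal (2 * Real.pi))⁻¹ * ∫⁻ θ in Ioc 0 (2 * Real.pi), F (circleMap c R θ) := by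
  rw [← ofReal_two_pi_mul_circleLAverage, ← mul_assoc,
    ENNReal.inv_mul_cancel (by positivity) ENNReal.ofReal_ne_top, one_mul]

theorem circleLAverage_const (a : ℝ≥0∞) (c : ℂ) (R : ℝ) : circleLAverage (fun _ => a) c R = a :=
  setLAverage_const (by simp [Real.pi_pos]) measure_Ioc_lt_top.ne a

theorem circleLAverage_const_mul {k : ℝ≥0∞} (hk : k ≠ ∞) (F : ℂ → ℝ≥0∞) (c : ℂ) (R : ℝ) :
    circleLAverage (fun z => k * F z) c R = k * circleLAverage F c R := by
  simp only [circleLAverage_eq_mul_lintegral, lintegral_const_mul' _ _ hk, mul_left_comm]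

theorem circleLAverage_finsetSum {ι : Type*} (s : Finset ι) {F : ι → ℂ → ℝ≥0∞} {c : ℂ} {R : ℝ}
    (hF : ∀ i ∈ s, ContinuousOn (F i) (sphere c |R|)) :
    circleLAverage (fun z => ∑ i ∈ s, F i z) c R = ∑ i ∈ s, circleLAverage (F i) c R := by
  simp only [circleLAverage_eq_mul_lintegral, ← Finset.mul_sum]
  have hcont : ∀ i ∈ s, Continuous fun θ => F i (circleMap c R θ) := fun i hi =>
    (hF i hi).comp_continuous (continuous_circleMap c R) fun θ => circleMap_mem_sphere' c R θ
  rw [lintegral_finsetSum' _ fun i hi => (hcont i hi).aemeasurable]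

theorem circleLAverage_mono {F G : ℂ → ℝ≥0∞} {c : ℂ} {R : ℝ}
    (h : ∀ z ∈ sphere c |R|, F z ≤ G z) : circleLAverage F c R ≤ circleLAverage G c R :=
  setLAverage_mono_ae _ (ae_of_all _ fun θ => h _ (circleMap_mem_sphere' c R θ))

theorem circleLAverage_comp_mul_right (F : ℂ → ℝ≥0∞) (z : ℂ) :
    circleLAverage (fun ζ => F (ζ * z)) 0 1 = circleLAverage F 0 ‖z‖ := by
  have hshift := (measurePreserving_add_right volume z.arg).setLIntegral_comp_preimage_emb
    (measurableEmbedding_addRight z.arg) (fun θ => F (circleMap 0 ‖z‖ θ))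
    (Ioc z.arg (z.arg + 2 * Real.pi))
  rw [preimage_add_const_Ioc, sub_self, add_sub_cancel_left, setLIntegral_Ioc_circleMap] at hshift
  simp only [circleMap_zero_norm_add_arg] at hshift
  rw [circleLAverage_eq_mul_lintegral, hshift, ← mul_assoc,
    ENNReal.inv_mul_cancel (by positivity) ENNReal.ofReal_ne_top, one_mul]

theorem ofReal_circleAverage {v : ℂ → ℝ} {c : ℂ} {R : ℝ} (hv : CircleIntegrable v c R)
    (hv0 : ∀ z ∈ sphere c |R|, 0 ≤ v z) :
    ENNReal.ofReal (Real.circleAverage v c R) =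
      circleLAverage (fun z => ENNReal.ofReal (v z)) c R := by
  rw [Real.circleAverage_def, smul_eq_mul, ENNReal.ofReal_mul (by positivity),
    ENNReal.ofReal_inv_of_pos Real.two_pi_pos, circleLAverage_eq_mul_lintegral,
    intervalIntegral.integral_of_le Real.two_pi_pos.le, ofReal_integral_eq_lintegral_ofReal hv.1
      (ae_of_all _ fun θ => hv0 _ (circleMap_mem_sphere' c R θ))]

theorem ofReal_norm_rpow {E : Type*} [SeminormedAddGroup E] (a : E) {p : ℝ} (hp : 0 ≤ p) :
    ENNReal.ofReal (‖a‖ ^ p) = ‖a‖ₑ ^ p := by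
  rw [← ENNReal.ofReal_rpow_of_nonneg (norm_nonneg a) hp, ofReal_norm]

theorem ofReal_circleAverage_norm_rpow {E : Type*} [SeminormedAddGroup E] {p : ℝ} (hp : 0 ≤ p)
    {g : ℂ → E} {c : ℂ} {R : ℝ} (hg : ContinuousOn g (sphere c |R|)) :
    ENNReal.ofReal (Real.circleAverage (fun z => ‖g z‖ ^ p) c R) =
      circleLAverage (fun z => ‖g z‖ₑ ^ p) c R := by
  have hcont : ContinuousOn (fun z => ‖g z‖ ^ p) (sphere c |R|) :=
    hg.norm.rpow_const fun _ _ => .inr hp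
  rw [ofReal_circleAverage hcont.circleIntegrable' fun z _ => by positivity]
  simp only [ofReal_norm_rpow _ hp]

theorem setLIntegral_ball_eq_setLIntegral_prod (F : ℂ → ℝ≥0∞) (c : ℂ) (R : ℝ) :
    ∫⁻ z in ball c R, F z =
      ∫⁻ x in Ioo 0 R ×ˢ Ioo (-Real.pi) Real.pi, ENNReal.ofReal x.1 * F (circleMap c x.1 x.2) := by
  have hpolar : ∀ x : ℝ × ℝ, c + Complex.polarCoord.symm x = circleMap c x.1 x.2 := fun x => by
    rw [Complex.polarCoord_symm_apply, circleMap, Complex.exp_mul_I]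
    push_cast
    rfl
  have hind : ∀ x ∈ polarCoord.target,
      ENNReal.ofReal x.1 • (ball c R).indicator F (c + Complex.polarCoord.symm x) =
        (Iio R ×ˢ univ).indicator (fun x => ENNReal.ofReal x.1 * F (circleMap c x.1 x.2)) x := by
    rintro ⟨t, θ⟩ ⟨ht, -⟩
    have hmem : circleMap c t θ ∈ ball c R ↔ (t, θ) ∈ Iio R ×ˢ (univ : Set ℝ) := by
      simp [circleMap, abs_of_pos (show 0 < t from ht)]
    rw [hpolar]
    by_cases h : circleMap c t θ ∈ ball c R
    · rw [indicator_of_mem h, indicator_of_mem (hmem.1 h), smul_eq_mul]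
    · rw [indicator_of_notMem h, indicator_of_notMem (mt hmem.2 h), smul_zero]
  rw [← lintegral_indicator measurableSet_ball, ← lintegral_add_left_eq_self _ c,
    ← Complex.lintegral_comp_polarCoord_symm,
    setLIntegral_congr_fun polarCoord.open_target.measurableSet hind,
    setLIntegral_indicator (measurableSet_Iio.prod .univ), polarCoord_target, prod_inter_prod,
    univ_inter, Iio_inter_Ioi]

theorem setLIntegral_Ioo_ofReal_mul_circleMap_mul {F : ℂ → ℝ≥0∞} {c : ℂ} {t : ℝ}
    (hF : ContinuousOn F (sphere c |t|)) (a : ℝ≥0∞) :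
    ∫⁻ θ in Ioo (-Real.pi) Real.pi, ENNReal.ofReal t * (F (circleMap c t θ) * a) =
      ENNReal.ofReal (2 * Real.pi) * (ENNReal.ofReal t * circleLAverage F c t * a) := by
  have hcont : Continuous (fun θ => F (circleMap c t θ)) :=
    hF.comp_continuous (continuous_circleMap c t) fun θ => circleMap_mem_sphere' c t θ
  have hperiod := setLIntegral_Ioc_circleMap F c t (-Real.pi)
  rw [show -Real.pi + 2 * Real.pi = Real.pi by ring,
    ← Measure.restrict_congr_set Ioo_ae_eq_Ioc] at hperiod
  rw [lintegral_const_mul' _ _ ENNReal.ofReal_ne_top, lintegral_mul_const _ hcont.measurable,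
    hperiod]
  ring

theorem setLIntegral_ball_mul_radial {F : ℂ → ℝ≥0∞} {w : ℝ → ℝ≥0∞} {c : ℂ} {R : ℝ}
    (hF : ContinuousOn F (ball c R)) (hw : AEMeasurable w (volume.restrict (Ioo 0 R))) :
    ∫⁻ z in ball c R, F z * w (dist z c) =
      ENNReal.ofReal (2 * Real.pi) *
        ∫⁻ t in Ioo 0 R, ENNReal.ofReal t * circleLAverage F c t * w t := by
  have hmaps : MapsTo (fun x : ℝ × ℝ => circleMap c x.1 x.2)
      (Ioo 0 R ×ˢ Ioo (-Real.pi) Real.pi) (ball c R) := by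
    rintro ⟨t, θ⟩ ⟨ht, -⟩
    simpa [circleMap, abs_of_pos ht.1] using ht.2
  have hF' : AEMeasurable (fun x : ℝ × ℝ => F (circleMap c x.1 x.2))
      ((volume.restrict (Ioo 0 R)).prod (volume.restrict (Ioo (-Real.pi) Real.pi))) := by
    rw [Measure.prod_restrict]
    refine (hF.comp (Continuous.continuousOn ?_) hmaps).aemeasurable
      (measurableSet_Ioo.prod measurableSet_Ioo)
    simp only [circleMap]
    fun_prop
  rw [setLIntegral_ball_eq_setLIntegral_prod]
  calc ∫⁻ x in Ioo 0 R ×ˢ Ioo (-Real.pi) Real.pi,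
        ENNReal.ofReal x.1 * (F (circleMap c x.1 x.2) * w (dist (circleMap c x.1 x.2) c))
      = ∫⁻ x in Ioo 0 R ×ˢ Ioo (-Real.pi) Real.pi,
          ENNReal.ofReal x.1 * (F (circleMap c x.1 x.2) * w x.1) := by
        refine setLIntegral_congr_fun (measurableSet_Ioo.prod measurableSet_Ioo) fun x hx => ?_
        simp only [circleMap, dist_self_add_left, norm_mul, Complex.norm_exp_ofReal_mul_I, mul_one,
          Complex.norm_real, Real.norm_eq_abs, abs_of_pos hx.1.1]
    _ = ∫⁻ t in Ioo 0 R, ∫⁻ θ in Ioo (-Real.pi) Real.pi,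
          ENNReal.ofReal t * (F (circleMap c t θ) * w t) := by
        rw [Measure.volume_eq_prod, ← Measure.prod_restrict]
        exact lintegral_prod _ ((ENNReal.measurable_ofReal.comp measurable_fst).aemeasurable.mul
          (hF'.mul hw.comp_fst))
    _ = ∫⁻ t in Ioo 0 R, ENNReal.ofReal (2 * Real.pi) *
          (ENNReal.ofReal t * circleLAverage F c t * w t) := by
        refine setLIntegral_congr_fun measurableSet_Ioo fun t ht => ?_
        refine setLIntegral_Ioo_ofReal_mul_circleMap_mul (hF.mono ?_) _
        rw [abs_of_pos ht.1]
        exact sphere_subset_ball ht.2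
    _ = ENNReal.ofReal (2 * Real.pi) *
          ∫⁻ t in Ioo 0 R, ENNReal.ofReal t * circleLAverage F c t * w t :=
        lintegral_const_mul' _ _ ENNReal.ofReal_ne_top

theorem setLIntegral_Ioo_ofReal {R : ℝ} (hR : 0 ≤ R) :
    ∫⁻ t in Ioo 0 R, ENNReal.ofReal t = ENNReal.ofReal (R ^ 2 / 2) := by
  have hint : IntegrableOn (fun t : ℝ => t) (Ioc 0 R) := continuous_id.integrableOn_Ioc
  rw [Measure.restrict_congr_set Ioo_ae_eq_Ioc, ← ofReal_integral_eq_lintegral_ofReal hint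
    ((ae_restrict_mem measurableSet_Ioc).mono fun t ht => ht.1.le),
    ← intervalIntegral.integral_of_le hR]
  simp

theorem le_setLAverage_ball_of_le_circleLAverage {F : ℂ → ℝ≥0∞} {a : ℝ≥0∞} {c : ℂ} {R : ℝ}
    (hR : 0 < R) (hF : ContinuousOn F (ball c R))
    (h : ∀ t ∈ Ioo 0 R, a ≤ circleLAverage F c t) :
    a ≤ ⨍⁻ z in ball c R, F z ∂volume := by
  have hvol : volume (ball c R) = ENNReal.ofReal (2 * Real.pi) * ENNReal.ofReal (R ^ 2 / 2) := by
    have hpolar := setLIntegral_ball_mul_radial (F := fun _ => 1) (w := fun _ => 1) (c := c)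
      (R := R) continuousOn_const aemeasurable_const
    simpa [circleLAverage_const, setLIntegral_Ioo_ofReal hR.le] using hpolar
  rw [setLAverage_eq, ENNReal.le_div_iff_mul_le (.inl (measure_ball_pos _ _ hR).ne')
    (.inl measure_ball_lt_top.ne), hvol]
  calc a * (ENNReal.ofReal (2 * Real.pi) * ENNReal.ofReal (R ^ 2 / 2))
      = ENNReal.ofReal (2 * Real.pi) * ∫⁻ t in Ioo 0 R, ENNReal.ofReal t * a * 1 := by
        simp only [mul_one]
        rw [← setLIntegral_Ioo_ofReal hR.le,
          lintegral_mul_const _ ENNReal.measurable_ofReal]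
        ring
    _ ≤ ENNReal.ofReal (2 * Real.pi) *
          ∫⁻ t in Ioo 0 R, ENNReal.ofReal t * circleLAverage F c t * 1 := by
        gcongr ENNReal.ofReal (2 * Real.pi) * ?_
        exact setLIntegral_mono' measurableSet_Ioo fun t ht => by
          have := h t ht
          gcongr
    _ = ∫⁻ z in ball c R, F z := by
        simpa only [mul_one] using
          (setLIntegral_ball_mul_radial (w := fun _ => 1) hF aemeasurable_const).symm

theorem circleLAverage_enorm_rpow_mono {p : ℝ} (hp : 0 < p) {f : ℂ → ℂ} {R : ℝ}
    (hf : DifferentiableOn ℂ f (ball 0 R)) {s r : ℝ} (hs : 0 ≤ s) (hsr : s ≤ r) (hr : r < R) :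
    circleLAverage (fun z => ‖f z‖ₑ ^ p) 0 s ≤ circleLAverage (fun z => ‖f z‖ₑ ^ p) 0 r := by
  have hsub : closedBall (0 : ℂ) r ⊆ ball 0 R := closedBall_subset_ball hr
  have hcont : ContinuousOn (fun z => ‖f z‖ ^ p) (closedBall 0 r) :=
    (hf.continuousOn.mono hsub).norm.rpow_const fun _ _ => .inr hp.le
  obtain ⟨v, hv⟩ := ContinuousMap.exists_restrict_eq (Y := ℝ) isClosed_closedBall
    ⟨_, hcont.domRestrict⟩
  replace hv : ∀ z ∈ closedBall (0 : ℂ) r, v z = ‖f z‖ ^ p := fun z hz =>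
    congrArg (fun g => g ⟨z, hz⟩) hv
  have hmono := circleAverage_mono_of_submean v.continuous hs hsr fun c ε hε hcε => by
    rw [hv c (hcε (mem_closedBall_self hε.le))]
    refine (norm_rpow_le_circleAverage hp hε
      ((hf.analyticOnNhd isOpen_ball).mono (hcε.trans hsub))).trans_eq
      (Real.circleAverage_congr_sphere fun z hz => ?_)
    rw [abs_of_pos hε] at hz
    exact (hv z (hcε (sphere_subset_closedBall hz))).symm
  have hmean : ∀ t ∈ Icc 0 r, circleLAverage (fun z => ‖f z‖ₑ ^ p) 0 t =
      ENNReal.ofReal (Real.circleAverage v 0 t) := fun t ht => by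
    have hsphere : sphere (0 : ℂ) |t| ⊆ closedBall 0 r := by
      rw [abs_of_nonneg ht.1]
      exact sphere_subset_closedBall.trans (closedBall_subset_closedBall ht.2)
    rw [← ofReal_circleAverage_norm_rpow hp.le (hf.continuousOn.mono (hsphere.trans hsub)),
      Real.circleAverage_congr_sphere fun z hz => hv z (hsphere hz)]
  rw [hmean s ⟨hs, hsr⟩, hmean r ⟨hs.trans hsr, le_rfl⟩]
  exact ENNReal.ofReal_le_ofReal hmono

end CircleLAverage

/-! ### Local estimates by the real part -/

section LocalEstimates

theorem enorm_re_le_circleLAverage {f : ℂ → ℂ} {c : ℂ} {R : ℝ} (hR : 0 < R)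
    (hf : DifferentiableOn ℂ f (closedBall c R)) :
    ‖(f c).re‖ₑ ≤ circleLAverage (fun z => ‖(f z).re‖ₑ) c R := by
  have hmean : Real.circleAverage f c R = f c := DiffContOnCl.circleAverage <| by
    rw [abs_of_pos hR]
    exact DifferentiableOn.diffContOnCl (by rwa [closure_ball _ hR.ne'])
  have hcont : ContinuousOn f (sphere c R) := hf.continuousOn.mono sphere_subset_closedBall
  have hre : Real.circleAverage (fun z => (f z).re) c R = (f c).re := by
    rw [← hmean]
    exact Complex.reCLM.circleAverage_comp_comm (hcont.circleIntegrable hR.le)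
  have habs : ContinuousOn (fun z => |(f z).re|) (sphere c R) :=
    (Complex.continuous_re.comp_continuousOn hcont).abs
  calc ‖(f c).re‖ₑ = ENNReal.ofReal |(f c).re| := Real.enorm_eq_ofReal_abs _
    _ ≤ ENNReal.ofReal (Real.circleAverage (fun z => |(f z).re|) c R) := by
        rw [← hre]
        exact ENNReal.ofReal_le_ofReal Real.abs_circleAverage_le_circleAverage_abs
    _ = circleLAverage (fun z => ‖(f z).re‖ₑ) c R := by
        simp only [ofReal_circleAverage (habs.circleIntegrable hR.le) fun _ _ => abs_nonneg _,
          Real.enorm_eq_ofReal_abs]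

theorem enorm_re_le_setLAverage_ball {f : ℂ → ℂ} {c : ℂ} {R : ℝ} (hR : 0 < R)
    (hf : DifferentiableOn ℂ f (ball c R)) :
    ‖(f c).re‖ₑ ≤ ⨍⁻ z in ball c R, ‖(f z).re‖ₑ ∂volume :=
  le_setLAverage_ball_of_le_circleLAverage hR
    (Complex.continuous_re.comp_continuousOn hf.continuousOn).enorm
    fun _ ht => enorm_re_le_circleLAverage ht.1 (hf.mono (closedBall_subset_ball ht.2))

theorem sq_mul_setLAverage_ball_le (F : ℂ → ℝ≥0∞) {w c : ℂ} {s R : ℝ}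
    (h : ball w s ⊆ ball c R) :
    ENNReal.ofReal s ^ 2 * ⨍⁻ z in ball w s, F z ∂volume ≤
      ENNReal.ofReal R ^ 2 * ⨍⁻ z in ball c R, F z ∂volume := by
  have hmean : ∀ (c : ℂ) (R : ℝ),
      NNReal.pi * (ENNReal.ofReal R ^ 2 * ⨍⁻ z in ball c R, F z ∂volume) =
        ∫⁻ z in ball c R, F z := fun c R => by
    rw [← measure_mul_setLAverage F measure_ball_lt_top.ne, Complex.volume_ball]
    ring
  have hpi : (NNReal.pi : ℝ≥0∞) ≠ 0 := by simpa using NNReal.pi_ne_zero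
  rw [← ENNReal.mul_le_mul_iff_right hpi ENNReal.coe_ne_top, hmean, hmean]
  exact lintegral_mono_set h

/-- The function `(ϱ - |z - c|)^α g z` is maximised at `w`, and `d = ϱ - |w - c|`. -/
theorem exists_ball_le_two_rpow_mul {g : ℂ → ℝ} {c : ℂ} {ϱ α : ℝ} (hϱ : 0 ≤ ϱ) (hα : 0 ≤ α)
    (hg : ContinuousOn g (closedBall c ϱ)) (hg0 : ∀ z, 0 ≤ g z) :
    ∃ w d, 0 ≤ d ∧ ball w d ⊆ ball c ϱ ∧ ϱ ^ α * g c ≤ d ^ α * g w ∧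
      ∀ z ∈ ball w (d / 2), g z ≤ 2 ^ α * g w := by
  obtain ⟨w, hw, hmax⟩ := (isCompact_closedBall c ϱ).exists_isMaxOn
    (f := fun z => (ϱ - dist z c) ^ α * g z) ⟨c, mem_closedBall_self hϱ⟩
    ((ContinuousOn.rpow_const (by fun_prop) fun _ _ => .inr hα).mul hg)
  have hd : 0 ≤ ϱ - dist w c := sub_nonneg.2 hw
  refine ⟨w, ϱ - dist w c, hd, ball_subset_ball' (by linarith), ?_, fun z hz => ?_⟩
  · simpa using hmax (mem_closedBall_self hϱ)
  have hd' : 0 < ϱ - dist w c := by linarith [pos_of_mem_ball hz]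
  have hzc : (ϱ - dist w c) / 2 ≤ ϱ - dist z c := by
    linarith [dist_triangle z w c, mem_ball.1 hz]
  have hle : ((ϱ - dist w c) / 2) ^ α * g z ≤ (ϱ - dist w c) ^ α * g w :=
    (mul_le_mul_of_nonneg_right (Real.rpow_le_rpow (by positivity) hzc hα) (hg0 z)).trans
      (hmax (mem_closedBall.2 (by linarith)))
  rw [Real.div_rpow hd (by norm_num), div_mul_eq_mul_div, div_le_iff₀ (by positivity),
    mul_assoc] at hle
  linarith [le_of_mul_le_mul_left hle (by positivity)]

theorem rpow_mul_le_add_of_le_mul {p : ℝ} (hp : 0 ≤ p) {a M κ : ℝ≥0∞} (h : a ≤ κ * M) :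
    M ^ p * a ≤ M ^ p * (M / 2) + κ * 2 ^ p * M * a ^ p := by
  rcases le_or_gt a (M / 2) with hle | hlt
  · exact (mul_le_mul_right hle _).trans le_self_add
  · have hM : M ≤ 2 * a := by
      rw [mul_comm, ← ENNReal.div_le_iff two_ne_zero ENNReal.ofNat_ne_top]
      exact hlt.le
    calc M ^ p * a ≤ (2 * a) ^ p * (κ * M) := by gcongr
      _ = κ * 2 ^ p * M * a ^ p := by
          rw [ENNReal.mul_rpow_of_nonneg _ _ hp]
          ring
      _ ≤ _ := le_add_self

/-- Splitting at `u ≤ M / 2`, the small values of `u` account for at most half of its mean. -/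
theorem rpow_le_lintegral_rpow_of_le_lintegral {α : Type*} {_ : MeasurableSpace α}
    {μ : Measure α} [IsProbabilityMeasure μ] {p : ℝ} (hp : 0 < p) {u : α → ℝ≥0∞} {M κ : ℝ≥0∞}
    (hM : M ≠ ∞) (hκ : κ ≠ ∞) (hu : ∀ᵐ x ∂μ, u x ≤ κ * M) (hmean : M ≤ ∫⁻ x, u x ∂μ) :
    M ^ p ≤ 2 * (κ * 2 ^ p) * ∫⁻ x, u x ^ p ∂μ := by
  rcases eq_or_ne M 0 with rfl | hM0
  · rw [ENNReal.zero_rpow_of_pos hp]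
    exact zero_le
  have hMp : M ^ p ≠ ∞ := ENNReal.rpow_ne_top_of_nonneg hp.le hM
  have h2p : (2 : ℝ≥0∞) ^ p ≠ ∞ := ENNReal.rpow_ne_top_of_nonneg hp.le ENNReal.ofNat_ne_top
  have hsplit : M ^ p * M ≤ M ^ p * (M / 2) + κ * 2 ^ p * M * ∫⁻ x, u x ^ p ∂μ :=
    calc M ^ p * M ≤ ∫⁻ x, M ^ p * u x ∂μ := by
          rw [lintegral_const_mul' _ _ hMp]
          gcongr
      _ ≤ ∫⁻ x, M ^ p * (M / 2) + κ * 2 ^ p * M * u x ^ p ∂μ :=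
          lintegral_mono_ae (hu.mono fun x hx => rpow_mul_le_add_of_le_mul hp.le hx)
      _ = _ := by
          rw [lintegral_add_left measurable_const, lintegral_const, measure_univ, mul_one,
            lintegral_const_mul' _ _ (by finiteness)]
  have hhalf : M ^ p * (M / 2) ≤ κ * 2 ^ p * M * ∫⁻ x, u x ^ p ∂μ := by
    rw [← ENNReal.add_le_add_iff_left (a := M ^ p * (M / 2)) (by finiteness), ← mul_add,
      ENNReal.add_halves]
    exact hsplit
  rw [← ENNReal.mul_le_mul_iff_left (ENNReal.half_pos hM0).ne' (by finiteness)]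
  calc M ^ p * (M / 2) ≤ κ * 2 ^ p * (2 * (M / 2)) * ∫⁻ x, u x ^ p ∂μ := by
        rwa [ENNReal.mul_div_cancel two_ne_zero ENNReal.ofNat_ne_top]
    _ = _ := by ring

theorem exists_ball_enorm_le_two_rpow_mul {p : ℝ} (hp : 0 < p) {u : ℂ → ℝ} {c : ℂ} {ϱ : ℝ}
    (hϱ : 0 ≤ ϱ) (hu : ContinuousOn u (closedBall c ϱ)) :
    ∃ w d, 0 ≤ d ∧ ball w d ⊆ ball c ϱ ∧
      ENNReal.ofReal ϱ ^ 2 * ‖u c‖ₑ ^ p ≤ ENNReal.ofReal d ^ 2 * ‖u w‖ₑ ^ p ∧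
      ∀ z ∈ ball w (d / 2), ‖u z‖ₑ ≤ 2 ^ (2 / p) * ‖u w‖ₑ := by
  obtain ⟨w, d, hd, hball, hmax, hbound⟩ := exists_ball_le_two_rpow_mul (α := 2 / p) hϱ
    (by positivity) hu.norm fun _ => norm_nonneg _
  have hpow : ∀ x y : ℝ, 0 ≤ x → ENNReal.ofReal (x ^ (2 / p) * ‖y‖) =
      ENNReal.ofReal x ^ (2 / p) * ‖y‖ₑ := fun x y hx => by
    rw [ENNReal.ofReal_mul (by positivity), ← ENNReal.ofReal_rpow_of_nonneg hx (by positivity),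
      ofReal_norm]
  refine ⟨w, d, hd, hball, ?_, fun z hz => ?_⟩
  · have h := ENNReal.rpow_le_rpow (ENNReal.ofReal_le_ofReal hmax) hp.le
    simpa only [hpow _ _ hϱ, hpow _ _ hd, ENNReal.mul_rpow_of_nonneg _ _ hp.le, ← ENNReal.rpow_mul,
      div_mul_cancel₀ _ hp.ne', ENNReal.rpow_ofNat] using h
  · have h := ENNReal.ofReal_le_ofReal (hbound z hz)
    rwa [hpow _ _ zero_le_two, ofReal_norm, ENNReal.ofReal_ofNat] at h

/-- Hardy and Littlewood. It suffices to argue on a disc where `|u|` is at most a constant times its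
value at the centre, and `exists_ball_enorm_le_two_rpow_mul` provides one. -/
theorem exists_enorm_rpow_le_setLAverage_ball {p : ℝ} (hp : 0 < p) :
    ∃ K : ℝ≥0, ∀ (u : ℂ → ℝ) (c : ℂ) (R : ℝ), 0 < R → ContinuousOn u (ball c R) →
      (∀ w r, 0 < r → ball w r ⊆ ball c R → ‖u w‖ₑ ≤ ⨍⁻ z in ball w r, ‖u z‖ₑ ∂volume) →
      ‖u c‖ₑ ^ p ≤ K * ⨍⁻ z in ball c R, ‖u z‖ₑ ^ p ∂volume := by
  let K : ℝ≥0∞ := 2 * (2 ^ (2 / p) * 2 ^ p)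
  have hK : 16 * K ≠ ∞ := by finiteness
  refine ⟨(16 * K).toNNReal, fun u c R hR hu hsub => ?_⟩
  rw [ENNReal.coe_toNNReal hK]
  obtain ⟨w, d, hd, hball, hmax, hbound⟩ := exists_ball_enorm_le_two_rpow_mul hp (half_pos hR).le
    (hu.mono (closedBall_subset_ball (half_lt_self hR)))
  have hsq : ∀ x : ℝ, ENNReal.ofReal x ^ 2 = 4 * ENNReal.ofReal (x / 2) ^ 2 := fun x => by
    rw [show x = 2 * (x / 2) by ring, ENNReal.ofReal_mul zero_le_two, mul_pow]
    norm_num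
  have hballR : ball w (d / 2) ⊆ ball c R :=
    (ball_subset_ball (by linarith)).trans (hball.trans (ball_subset_ball (by linarith)))
  have hw : ENNReal.ofReal d ^ 2 * ‖u w‖ₑ ^ p ≤
      ENNReal.ofReal d ^ 2 * (K * ⨍⁻ z in ball w (d / 2), ‖u z‖ₑ ^ p ∂volume) := by
    rcases hd.eq_or_lt with rfl | hd
    · simp
    have : NeZero (volume.restrict (ball w (d / 2))) :=
      ⟨Measure.restrict_eq_zero.not.2 (measure_ball_pos _ _ (half_pos hd)).ne'⟩
    have : IsFiniteMeasure (volume.restrict (ball w (d / 2))) :=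
      isFiniteMeasure_restrict.2 measure_ball_lt_top.ne
    gcongr
    exact rpow_le_lintegral_rpow_of_le_lintegral hp enorm_ne_top (by finiteness)
      (Measure.ae_smul_measure (ae_restrict_of_forall_mem measurableSet_ball hbound) _)
      (hsub w _ (half_pos hd) hballR)
  rw [← ENNReal.mul_le_mul_iff_right (a := ENNReal.ofReal (R / 2) ^ 2) (by positivity)
    (by finiteness)]
  calc ENNReal.ofReal (R / 2) ^ 2 * ‖u c‖ₑ ^ p
      ≤ 4 * K * (ENNReal.ofReal (d / 2) ^ 2 * ⨍⁻ z in ball w (d / 2), ‖u z‖ₑ ^ p ∂volume) := by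
        refine (hmax.trans hw).trans_eq ?_
        rw [hsq d]
        ring
    _ ≤ 4 * K * (ENNReal.ofReal R ^ 2 * ⨍⁻ z in ball c R, ‖u z‖ₑ ^ p ∂volume) := by
        gcongr 4 * K * ?_
        exact sq_mul_setLAverage_ball_le _ hballR
    _ = ENNReal.ofReal (R / 2) ^ 2 * (16 * K * ⨍⁻ z in ball c R, ‖u z‖ₑ ^ p ∂volume) := by
        rw [hsq R]
        ring

theorem norm_sub_le_of_abs_re_le {f : ℂ → ℂ} {c z : ℂ} {R S : ℝ} (hR : 0 < R)
    (hf : DifferentiableOn ℂ f (ball c R)) (hS : ∀ w ∈ ball c R, |(f w).re| ≤ S)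
    (hz : dist z c ≤ 2 / 3 * R) : ‖f z - f c‖ ≤ 8 * S := by
  have hS0 : 0 ≤ S := (abs_nonneg _).trans (hS c (mem_ball_self hR))
  refine le_of_forall_pos_le_add fun η hη => ?_
  have hmaps : MapsTo (fun w => c + w) (ball 0 R) (ball c R) := fun w hw => by simpa using hw
  have hre : MapsTo (fun w => f (c + w) - f c) (ball 0 R)
      {w | w.re ≤ 2 * S + η / 4} := fun w hw => by
    have h₁ := abs_le.1 (hS (c + w) (hmaps hw))
    have h₂ := abs_le.1 (hS c (mem_ball_self hR))
    simp only [mem_ofPred_eq, Complex.sub_re]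
    linarith
  rw [dist_eq_norm] at hz
  have hBC := Complex.borelCaratheodory_zero (z := z - c) (by positivity)
    ((hf.comp (by fun_prop) hmaps).sub_const _) hre hR
    (by rw [mem_ball_zero_iff]; linarith) (by simp)
  simp only [Function.comp_apply, add_sub_cancel] at hBC
  refine hBC.trans ?_
  rw [div_le_iff₀ (by linarith)]
  have : 0 ≤ 2 * S + η / 4 := by positivity
  nlinarith

theorem enorm_sub_le_of_enorm_re_le {f : ℂ → ℂ} {c z w : ℂ} {R : ℝ} {S : ℝ≥0∞} (hR : 0 < R)
    (hf : DifferentiableOn ℂ f (ball c R)) (hS : ∀ v ∈ ball c R, ‖(f v).re‖ₑ ≤ S)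
    (hz : dist z c ≤ 2 / 3 * R) (hw : dist w c ≤ 2 / 3 * R) : ‖f z - f w‖ₑ ≤ 16 * S := by
  rcases eq_or_ne S ∞ with rfl | hStop
  · simp
  lift S to ℝ≥0 using hStop
  have hS' : ∀ v ∈ ball c R, |(f v).re| ≤ S := fun v hv => by exact_mod_cast hS v hv
  have h : ‖f z - f w‖ ≤ 16 * S := by
    rw [← sub_sub_sub_cancel_right (f z) (f w) (f c)]
    linarith [norm_sub_le (f z - f c) (f w - f c), norm_sub_le_of_abs_re_le hR hf hS' hz,
      norm_sub_le_of_abs_re_le hR hf hS' hw]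
  exact_mod_cast h

theorem exists_enorm_re_rpow_le_setLAverage_ball {p : ℝ} (hp : 0 < p) :
    ∃ K : ℝ≥0, ∀ (f : ℂ → ℂ) (c : ℂ) (R : ℝ), 0 < R → DifferentiableOn ℂ f (ball c R) →
      ‖(f c).re‖ₑ ^ p ≤ K * ⨍⁻ z in ball c R, ‖(f z).re‖ₑ ^ p ∂volume := by
  obtain ⟨K, hK⟩ := exists_enorm_rpow_le_setLAverage_ball hp
  exact ⟨K, fun f c R hR hf => hK (fun z => (f z).re) c R hR
    (Complex.continuous_re.comp_continuousOn hf.continuousOn)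
    fun _ _ hr hball => enorm_re_le_setLAverage_ball hr (hf.mono hball)⟩

theorem exists_enorm_sub_rpow_le_setLAverage_ball {p : ℝ} (hp : 0 < p) :
    ∃ K : ℝ≥0, ∀ (f : ℂ → ℂ) (c : ℂ) (R : ℝ), 0 < R → DifferentiableOn ℂ f (ball c R) →
      ∀ z ∈ closedBall c (R / 2), ∀ w ∈ closedBall c (R / 2),
        ‖f z - f w‖ₑ ^ p ≤ K * ⨍⁻ v in ball c R, ‖(f v).re‖ₑ ^ p ∂volume := by
  obtain ⟨K, hK⟩ := exists_enorm_re_rpow_le_setLAverage_ball hp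
  refine ⟨16 ^ p * (16 * K), fun f c R hR hf z hz w hw => ?_⟩
  set A := ⨍⁻ v in ball c R, ‖(f v).re‖ₑ ^ p ∂volume
  have hre : ∀ w ∈ ball c (3 / 4 * R), ‖(f w).re‖ₑ ≤ (16 * K * A) ^ p⁻¹ := fun w hw => by
    have hwR : ball w (R / 4) ⊆ ball c R := ball_subset_ball' (by linarith [mem_ball.1 hw])
    have hmean : ⨍⁻ z in ball w (R / 4), ‖(f z).re‖ₑ ^ p ∂volume ≤ 16 * A := by
      have h := sq_mul_setLAverage_ball_le (fun z => ‖(f z).re‖ₑ ^ p) hwR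
      rw [← ENNReal.mul_le_mul_iff_right (a := ENNReal.ofReal (R / 4) ^ 2) (by positivity)
        (by finiteness)]
      calc ENNReal.ofReal (R / 4) ^ 2 * ⨍⁻ z in ball w (R / 4), ‖(f z).re‖ₑ ^ p ∂volume
          ≤ ENNReal.ofReal R ^ 2 * A := h
        _ = (ENNReal.ofReal (4 * (R / 4))) ^ 2 * A := by ring_nf
        _ = ENNReal.ofReal (R / 4) ^ 2 * (16 * A) := by
          rw [ENNReal.ofReal_mul zero_le_four, mul_pow, ENNReal.ofReal_ofNat]
          ring
    rw [ENNReal.le_rpow_inv_iff hp]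
    calc ‖(f w).re‖ₑ ^ p ≤ K * ⨍⁻ z in ball w (R / 4), ‖(f z).re‖ₑ ^ p ∂volume :=
          hK f w _ (by positivity) (hf.mono hwR)
      _ ≤ K * (16 * A) := by gcongr
      _ = 16 * K * A := by ring
  have hosc := enorm_sub_le_of_enorm_re_le (z := z) (w := w) (by positivity)
    (hf.mono (ball_subset_ball (by linarith))) hre
    (by linarith [mem_closedBall.1 hz]) (by linarith [mem_closedBall.1 hw])
  calc ‖f z - f w‖ₑ ^ p ≤ (16 * (16 * K * A) ^ p⁻¹) ^ p := by gcongr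
    _ = (16 ^ p * (16 * K) : ℝ≥0) * A := by
        rw [ENNReal.mul_rpow_of_nonneg _ _ hp.le, ENNReal.rpow_inv_rpow hp.ne']
        push_cast [ENNReal.coe_rpow_of_nonneg _ hp.le]
        ring

end LocalEstimates

/-! ### Dyadic increments -/

section DyadicIncrements

/-- The dyadic radii `1 - 2⁻ⁿ`, which increase to `1`. -/
noncomputable def dyad (n : ℕ) : ℝ := 1 - (1 / 2) ^ n

theorem dyad_zero : dyad 0 = 0 := by simp [dyad]

theorem dyad_lt_one (n : ℕ) : dyad n < 1 := by simp [dyad]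

theorem dyad_strictMono : StrictMono dyad := fun _ _ h =>
  sub_lt_sub_left (pow_lt_pow_right_of_lt_one₀ (by norm_num) (by norm_num) h) 1

theorem dyad_nonneg (n : ℕ) : 0 ≤ dyad n := dyad_zero ▸ dyad_strictMono.monotone (Nat.zero_le n)

theorem dyad_mem_Ico (n : ℕ) : dyad n ∈ Ico 0 1 := ⟨dyad_nonneg n, dyad_lt_one n⟩

theorem dyad_succ (n : ℕ) : dyad (n + 1) = (1 + dyad n) / 2 := by
  simp only [dyad, pow_succ]
  ring

/-- The supremum over `0 < s < r` of the `p`-th power means of `Re f` on the circles `|z| = s`, as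
an extended nonnegative number; it corresponds to `supMpp`. -/
noncomputable def supReMean (p : ℝ) (f : ℂ → ℂ) (r : ℝ) : ℝ≥0∞ :=
  ⨆ s ∈ Ioo 0 r, circleLAverage (fun z => ‖(f z).re‖ₑ ^ p) 0 s

theorem supReMean_mono (p : ℝ) (f : ℂ → ℂ) : Monotone (supReMean p f) := fun _ _ h =>
  biSup_mono (Ioo_subset_Ioo_right h)

theorem supReMean_le_circleLAverage {p : ℝ} (hp : 0 < p) {f : ℂ → ℂ} {R : ℝ}
    (hf : DifferentiableOn ℂ f (ball 0 R)) {r : ℝ} (hr : r < R) :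
    supReMean p f r ≤ circleLAverage (fun z => ‖f z‖ₑ ^ p) 0 r :=
  iSup₂_le fun s hs => calc
    circleLAverage (fun z => ‖(f z).re‖ₑ ^ p) 0 s ≤ circleLAverage (fun z => ‖f z‖ₑ ^ p) 0 s :=
      circleLAverage_mono fun z _ => ENNReal.rpow_le_rpow
        (enorm_le_iff_norm_le.2 (Complex.abs_re_le_norm (f z))) hp.le
    _ ≤ circleLAverage (fun z => ‖f z‖ₑ ^ p) 0 r :=
      circleLAverage_enorm_rpow_mono hp hf hs.1.le hs.2.le hr

theorem circleLAverage_setLAverage_ball_le {G : ℂ → ℝ≥0∞} {c : ℂ} {R ρ : ℝ} (hR : 0 < R)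
    (hG : ContinuousOn G (ball 0 ρ)) (hball : ball c R ⊆ ball 0 ρ) :
    circleLAverage (fun ζ => ⨍⁻ v in ball c R, G (ζ * v) ∂volume) 0 1 ≤
      ⨆ s ∈ Ioo 0 ρ, circleLAverage G 0 s := by
  have hmaps : MapsTo (fun x : ℝ × ℂ => circleMap 0 1 x.1 * x.2)
      (Ioc 0 (2 * Real.pi) ×ˢ ball c R) (ball 0 ρ) := fun x hx => by
    simpa using hball hx.2
  have hmeas : AEMeasurable (fun x : ℝ × ℂ => G (circleMap 0 1 x.1 * x.2))
      ((volume.restrict (Ioc 0 (2 * Real.pi))).prod (volume.restrict (ball c R))) := by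
    rw [Measure.prod_restrict]
    exact (hG.comp (Continuous.continuousOn (by fun_prop)) hmaps).aemeasurable
      (measurableSet_Ioc.prod measurableSet_ball)
  have hvol : (volume (ball c R))⁻¹ ≠ ∞ := ENNReal.inv_ne_top.2 (measure_ball_pos _ _ hR).ne'
  calc circleLAverage (fun ζ => ⨍⁻ v in ball c R, G (ζ * v) ∂volume) 0 1
      = ⨍⁻ v in ball c R, circleLAverage G 0 ‖v‖ ∂volume := by
        have hrot : ∀ v, circleLAverage G 0 ‖v‖ = (ENNReal.ofReal (2 * Real.pi))⁻¹ *
            ∫⁻ θ in Ioc 0 (2 * Real.pi), G (circleMap 0 1 θ * v) := fun v => by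
          rw [← circleLAverage_comp_mul_right, circleLAverage_eq_mul_lintegral]
        simp only [hrot, circleLAverage_eq_mul_lintegral, setLAverage_eq, ENNReal.div_eq_inv_mul]
        rw [lintegral_const_mul' _ _ hvol, lintegral_const_mul' _ _ (by simp [Real.pi_pos]),
          lintegral_lintegral_swap hmeas, mul_left_comm]
    _ ≤ ⨆ s ∈ Ioo 0 ρ, circleLAverage G 0 s := by
        have hne : ∀ᵐ v ∂volume.restrict (ball c R), v ≠ 0 :=
          ae_restrict_of_ae (Measure.ae_ne volume 0)
        have hle : ∀ᵐ v ∂volume.restrict (ball c R),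
            circleLAverage G 0 ‖v‖ ≤ ⨆ s ∈ Ioo 0 ρ, circleLAverage G 0 s := by
          filter_upwards [hne, ae_restrict_mem measurableSet_ball] with v hv0 hv
          exact le_iSup₂_of_le ‖v‖ ⟨norm_pos_iff.2 hv0, by simpa using hball hv⟩ le_rfl
        exact (laverage_mono_ae hle).trans_eq
          (setLAverage_const (measure_ball_pos _ _ hR).ne' measure_ball_lt_top.ne _)

/-- The increments of `f` along the dyadic points of the radius through `ζ`. -/
noncomputable def dyadicIncr (f : ℂ → ℂ) (ζ : ℂ) : ℕ → ℝ≥0∞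
  | 0 => ‖f 0‖ₑ
  | n + 1 => ‖f (ζ * dyad (n + 1)) - f (ζ * dyad n)‖ₑ

theorem enorm_le_sum_dyadicIncr (f : ℂ → ℂ) (ζ : ℂ) (n : ℕ) :
    ‖f (ζ * dyad n)‖ₑ ≤ ∑ k ∈ Finset.range (n + 1), dyadicIncr f ζ k := by
  induction n with
  | zero => simp [dyadicIncr, dyad_zero]
  | succ n ih =>
    rw [Finset.sum_range_succ]
    calc ‖f (ζ * dyad (n + 1))‖ₑ
        = ‖f (ζ * dyad n) + (f (ζ * dyad (n + 1)) - f (ζ * dyad n))‖ₑ := by rw [add_sub_cancel]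
      _ ≤ ‖f (ζ * dyad n)‖ₑ + ‖f (ζ * dyad (n + 1)) - f (ζ * dyad n)‖ₑ := enorm_add_le _ _
      _ ≤ _ := by
        gcongr
        exact le_rfl

theorem differentiableOn_comp_mul_left {f : ℂ → ℂ} {ζ : ℂ} {R : ℝ}
    (hf : DifferentiableOn ℂ f (ball 0 R)) (hζ : ‖ζ‖ = 1) :
    DifferentiableOn ℂ (fun v => f (ζ * v)) (ball 0 R) :=
  hf.comp (by fun_prop) fun v hv => by simpa [hζ] using hv

theorem mul_dyad_mem_ball {ζ : ℂ} (hζ : ‖ζ‖ = 1) (n : ℕ) : ζ * dyad n ∈ ball (0 : ℂ) 1 := by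
  simpa [hζ, abs_of_nonneg (dyad_nonneg n)] using dyad_lt_one n

theorem continuousOn_dyadicIncr {f : ℂ → ℂ} (hf : ContinuousOn f (ball 0 1)) (n : ℕ) :
    ContinuousOn (fun ζ => dyadicIncr f ζ n) (sphere 0 1) := by
  have hpoint : ∀ m, ContinuousOn (fun ζ => f (ζ * dyad m)) (sphere 0 1) := fun m =>
    hf.comp (by fun_prop) fun ζ hζ => mul_dyad_mem_ball (by simpa using hζ) m
  cases n with
  | zero => exact continuousOn_const
  | succ n => exact ((hpoint _).sub (hpoint _)).enorm

/-- `1 - 3/4 · 2⁻ⁿ` is the midpoint of the dyadic radii `rₙ` and `rₙ₊₁`. -/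
theorem ball_subset_ball_dyad (n : ℕ) :
    ball ((1 - 3 / 4 * (1 / 2) ^ n : ℝ) : ℂ) ((1 / 2) ^ n / 2) ⊆ ball 0 (dyad (n + 2)) := by
  have : (0 : ℝ) < (1 / 2) ^ n := by positivity
  have : ((1 : ℝ) / 2) ^ n ≤ 1 := pow_le_one₀ (by norm_num) (by norm_num)
  refine ball_subset_ball' ?_
  rw [dist_zero_right, Complex.norm_real, Real.norm_eq_abs, abs_of_nonneg (by linarith), dyad,
    pow_add]
  linarith

theorem dyad_mem_closedBall (n : ℕ) :
    (dyad n : ℂ) ∈ closedBall ((1 - 3 / 4 * (1 / 2) ^ n : ℝ) : ℂ) ((1 / 2) ^ n / 2 / 2) ∧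
    (dyad (n + 1) : ℂ) ∈ closedBall ((1 - 3 / 4 * (1 / 2) ^ n : ℝ) : ℂ) ((1 / 2) ^ n / 2 / 2) := by
  simp only [mem_closedBall, Complex.dist_eq, ← Complex.ofReal_sub, Complex.norm_real, dyad,
    Real.norm_eq_abs, pow_succ, abs_le]
  have : (0 : ℝ) < (1 / 2) ^ n := by positivity
  constructor <;> constructor <;> linarith

theorem exists_circleLAverage_dyadicIncr_le {p : ℝ} (hp : 0 < p) :
    ∃ K : ℝ≥0, ∀ f : ℂ → ℂ, DifferentiableOn ℂ f (ball 0 1) → (f 0).im = 0 → ∀ n,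
      circleLAverage (fun ζ => dyadicIncr f ζ n ^ p) 0 1 ≤ K * supReMean p f (dyad (n + 1)) := by
  obtain ⟨K₀, hK₀⟩ := exists_enorm_re_rpow_le_setLAverage_ball hp
  obtain ⟨K₁, hK₁⟩ := exists_enorm_sub_rpow_le_setLAverage_ball hp
  refine ⟨max K₀ K₁, fun f hf hf0 n => ?_⟩
  have hfζ : ∀ ζ ∈ sphere (0 : ℂ) |1|, DifferentiableOn ℂ (fun v => f (ζ * v)) (ball 0 1) :=
    fun ζ hζ => differentiableOn_comp_mul_left hf (by simpa using hζ)
  have hcont : ∀ m, ContinuousOn (fun z => ‖(f z).re‖ₑ ^ p) (ball 0 (dyad m)) := fun m =>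
    (ENNReal.continuous_rpow_const.comp_continuousOn
      (Complex.continuous_re.comp_continuousOn hf.continuousOn).enorm).mono
      (ball_subset_ball (dyad_lt_one m).le)
  have haverage : ∀ {K : ℝ≥0} {c : ℂ} {R : ℝ}, 0 < R → K ≤ max K₀ K₁ →
      ball c R ⊆ ball 0 (dyad (n + 1)) →
      (∀ ζ ∈ sphere (0 : ℂ) |1|,
        dyadicIncr f ζ n ^ p ≤ K * ⨍⁻ v in ball c R, ‖(f (ζ * v)).re‖ₑ ^ p ∂volume) →
      circleLAverage (fun ζ => dyadicIncr f ζ n ^ p) 0 1 ≤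
        (max K₀ K₁ : ℝ≥0) * supReMean p f (dyad (n + 1)) := fun {K c R} hR hK hball hincr => by
    refine (circleLAverage_mono hincr).trans ?_
    rw [circleLAverage_const_mul ENNReal.coe_ne_top]
    gcongr
    exact circleLAverage_setLAverage_ball_le hR (hcont _) hball
  cases n with
  | zero =>
    refine haverage (K := K₀) (c := 0) (R := 1 / 2) (by norm_num) (le_max_left _ _)
      (ball_subset_ball (by norm_num [dyad])) fun ζ hζ => ?_
    have hhalf : ball (0 : ℂ) (1 / 2) ⊆ ball 0 1 := ball_subset_ball (by norm_num)
    have hlocal := hK₀ (fun v => f (ζ * v)) 0 (1 / 2) (by norm_num) ((hfζ ζ hζ).mono hhalf)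
    have hre : ‖f 0‖ₑ = ‖(f 0).re‖ₑ := by
      conv_lhs => rw [← Complex.re_add_im (f 0), hf0]
      simp [enorm_eq_nnnorm]
    rw [mul_zero, ← hre] at hlocal
    exact hlocal
  | succ n =>
    refine haverage (K := K₁) (by positivity) (le_max_right _ _) (ball_subset_ball_dyad n)
      fun ζ hζ => ?_
    have hball := (ball_subset_ball_dyad n).trans (ball_subset_ball (dyad_lt_one _).le)
    exact hK₁ (fun v => f (ζ * v)) _ _ (by positivity) ((hfζ ζ hζ).mono hball)
      _ (dyad_mem_closedBall n).2 _ (dyad_mem_closedBall n).1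

theorem exists_rpow_sum_le {p : ℝ} (hp : 0 < p) {q : ℝ≥0} (hq : 1 < q) :
    ∃ C : ℝ≥0, ∀ (s : Finset ℕ) (b : ℕ → ℝ≥0∞),
      (∑ m ∈ s, b m) ^ p ≤ C * ∑ m ∈ s, (q : ℝ≥0∞) ^ m * b m ^ p := by
  set ρ : ℝ≥0∞ := (q : ℝ≥0∞)⁻¹ ^ p⁻¹ with hρ
  have hq0 : (q : ℝ≥0∞) ≠ 0 := by simpa using (zero_lt_one.trans hq).ne'
  have hρ1 : ρ < 1 := ENNReal.rpow_lt_one (ENNReal.inv_lt_one.2 (by simpa using hq)) (inv_pos.2 hp)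
  have hsum : (∑' m : ℕ, ρ ^ m) ^ p ≠ ∞ := ENNReal.rpow_ne_top_of_nonneg hp.le <| by
    simpa [ENNReal.tsum_geometric, tsub_eq_zero_iff_le] using hρ1
  refine ⟨((∑' m : ℕ, ρ ^ m) ^ p).toNNReal, fun s b => ?_⟩
  rw [ENNReal.coe_toNNReal hsum]
  set M := ∑ m ∈ s, (q : ℝ≥0∞) ^ m * b m ^ p
  have hterm : ∀ m ∈ s, b m ≤ ρ ^ m * M ^ p⁻¹ := fun m hm => calc
    b m = ((q : ℝ≥0∞)⁻¹ ^ m * ((q : ℝ≥0∞) ^ m * b m ^ p)) ^ p⁻¹ := by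
      rw [← mul_assoc, ← mul_pow, ENNReal.inv_mul_cancel hq0 ENNReal.coe_ne_top, one_pow, one_mul,
        ENNReal.rpow_rpow_inv hp.ne']
    _ ≤ ((q : ℝ≥0∞)⁻¹ ^ m * M) ^ p⁻¹ := by
      gcongr
      exact Finset.single_le_sum (f := fun m => (q : ℝ≥0∞) ^ m * b m ^ p) (fun _ _ => zero_le) hm
    _ = ρ ^ m * M ^ p⁻¹ := by
      rw [ENNReal.mul_rpow_of_nonneg _ _ (inv_pos.2 hp).le, hρ, ← ENNReal.rpow_natCast,
        ← ENNReal.rpow_natCast, ← ENNReal.rpow_mul, ← ENNReal.rpow_mul,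
        mul_comm (m : ℝ)]
  calc (∑ m ∈ s, b m) ^ p ≤ ((∑' m : ℕ, ρ ^ m) * M ^ p⁻¹) ^ p := by
        gcongr
        refine (Finset.sum_le_sum hterm).trans ?_
        rw [← Finset.sum_mul]
        gcongr
        exact ENNReal.sum_le_tsum s
    _ = (∑' m : ℕ, ρ ^ m) ^ p * M := by
        rw [ENNReal.mul_rpow_of_nonneg _ _ hp.le, ENNReal.rpow_inv_rpow hp.ne']

theorem exists_circleLAverage_dyad_le {p : ℝ} (hp : 0 < p) {q : ℝ≥0} (hq : 1 < q) :
    ∃ C : ℝ≥0, ∀ f : ℂ → ℂ, DifferentiableOn ℂ f (ball 0 1) → (f 0).im = 0 → ∀ n,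
      circleLAverage (fun z => ‖f z‖ₑ ^ p) 0 (dyad n) ≤
        C * ∑ ij ∈ Finset.HasAntidiagonal.antidiagonal n,
          (q : ℝ≥0∞) ^ ij.1 * supReMean p f (dyad (ij.2 + 1)) := by
  obtain ⟨K, hK⟩ := exists_circleLAverage_dyadicIncr_le hp
  obtain ⟨C, hC⟩ := exists_rpow_sum_le hp hq
  refine ⟨C * K, fun f hf hf0 n => ?_⟩
  have hpoint : ∀ ζ : ℂ, ‖f (ζ * dyad n)‖ₑ ^ p ≤ C * ∑ ij ∈ Finset.HasAntidiagonal.antidiagonal n,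
      (q : ℝ≥0∞) ^ ij.1 * dyadicIncr f ζ ij.2 ^ p := fun ζ => by
    refine (ENNReal.rpow_le_rpow (enorm_le_sum_dyadicIncr f ζ n) hp.le).trans ?_
    rw [Finset.Nat.sum_antidiagonal_eq_sum_range_succ
      (fun i j => (q : ℝ≥0∞) ^ i * dyadicIncr f ζ j ^ p), ← Finset.sum_range_reflect]
    simpa using hC (Finset.range (n + 1)) fun m => dyadicIncr f ζ (n - m)
  have hcont : ∀ k (c : ℝ≥0∞), c ≠ ∞ →
      ContinuousOn (fun ζ => c * dyadicIncr f ζ k ^ p) (sphere 0 |1|) := fun k c hc =>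
    (ENNReal.continuous_const_mul hc).comp_continuousOn
      (ENNReal.continuous_rpow_const.comp_continuousOn
        (by simpa using continuousOn_dyadicIncr hf.continuousOn k))
  calc circleLAverage (fun z => ‖f z‖ₑ ^ p) 0 (dyad n)
      = circleLAverage (fun ζ => ‖f (ζ * dyad n)‖ₑ ^ p) 0 1 := by
        rw [circleLAverage_comp_mul_right (fun z => ‖f z‖ₑ ^ p), Complex.norm_real,
          Real.norm_of_nonneg (dyad_nonneg n)]
    _ ≤ circleLAverage (fun ζ => C * ∑ ij ∈ Finset.HasAntidiagonal.antidiagonal n,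
          (q : ℝ≥0∞) ^ ij.1 * dyadicIncr f ζ ij.2 ^ p) 0 1 :=
        circleLAverage_mono fun ζ _ => hpoint ζ
    _ = C * ∑ ij ∈ Finset.HasAntidiagonal.antidiagonal n, (q : ℝ≥0∞) ^ ij.1 *
          circleLAverage (fun ζ => dyadicIncr f ζ ij.2 ^ p) 0 1 := by
        rw [circleLAverage_const_mul ENNReal.coe_ne_top,
          circleLAverage_finsetSum _ fun ij _ => hcont ij.2 _ (by finiteness)]
        congr! with ij
        exact circleLAverage_const_mul (by finiteness) _ _ _
    _ ≤ C * ∑ ij ∈ Finset.HasAntidiagonal.antidiagonal n, (q : ℝ≥0∞) ^ ij.1 *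
          (K * supReMean p f (dyad (ij.2 + 1))) := by
        gcongr with ij
        exact hK f hf hf0 ij.2
    _ = _ := by
        push_cast
        simp only [mul_left_comm _ (K : ℝ≥0∞), ← Finset.mul_sum, mul_assoc]

end DyadicIncrements

/-! ### Monotone functions integrated against a weight -/

section DyadicSums

theorem iUnion_Ico_dyad : ⋃ n, Ico (dyad n) (dyad (n + 1)) = Ico 0 1 := by
  refine Subset.antisymm (iUnion_subset fun n x hx => ⟨(dyad_nonneg n).trans hx.1,
    hx.2.trans (dyad_lt_one _)⟩) fun x hx => mem_iUnion.2 ?_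
  obtain ⟨N, hN⟩ := exists_pow_lt_of_lt_one (sub_pos.2 hx.2) (by norm_num : (1 / 2 : ℝ) < 1)
  by_contra! hnot
  have hge : ∀ n, dyad n ≤ x := fun n => by
    induction n with
    | zero => exact dyad_zero.trans_le hx.1
    | succ n ih => exact not_lt.1 fun h => hnot n ⟨ih, h⟩
  exact (hge N).not_gt (lt_sub_comm.1 hN)

theorem pairwise_disjoint_Ico_dyad :
    Pairwise (Function.onFun Disjoint fun n => Ico (dyad n) (dyad (n + 1))) :=
  dyad_strictMono.monotone.pairwise_disjoint_on_Ico_succ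

theorem setLIntegral_Ico_eq_tsum_dyad (G : ℝ → ℝ≥0∞) :
    ∫⁻ r in Ico 0 1, G r = ∑' n, ∫⁻ r in Ico (dyad n) (dyad (n + 1)), G r := by
  rw [← iUnion_Ico_dyad, lintegral_iUnion (fun _ => measurableSet_Ico)
    pairwise_disjoint_Ico_dyad]

theorem tsum_setLIntegral_Ico_dyad_le (G : ℝ → ℝ≥0∞) (k : ℕ) :
    ∑' n, ∫⁻ r in Ico (dyad n) (dyad (n + k)), G r ≤ k * ∫⁻ r in Ico 0 1, G r := by
  induction k with
  | zero => simp
  | succ k ih =>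
    calc ∑' n, ∫⁻ r in Ico (dyad n) (dyad (n + (k + 1))), G r
        ≤ ∑' n, ((∫⁻ r in Ico (dyad n) (dyad (n + k)), G r) +
            ∫⁻ r in Ico (dyad (n + k)) (dyad (n + k + 1)), G r) := by
          refine ENNReal.tsum_le_tsum fun n =>
            (lintegral_mono_set ?_).trans (lintegral_union_le _ _ _)
          exact Ico_subset_Ico_union_Ico
      _ ≤ k * (∫⁻ r in Ico 0 1, G r) + ∫⁻ r in Ico 0 1, G r := by
          rw [ENNReal.tsum_add]
          gcongr
          rw [setLIntegral_Ico_eq_tsum_dyad]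
          exact ENNReal.tsum_comp_le_tsum_of_injective (add_left_injective k)
            fun n => ∫⁻ r in Ico (dyad n) (dyad (n + 1)), G r
      _ = _ := by push_cast; ring

variable {F w : ℝ → ℝ≥0∞} {a : ℕ → ℝ≥0∞} {A D : ℝ≥0∞}

theorem setLIntegral_mul_le_mul_tsum_dyad (hF : MonotoneOn F (Ico 0 1))
    (hw : AEMeasurable w (volume.restrict (Ico 0 1)))
    (hA : ∀ n, ∫⁻ r in Ico (dyad n) (dyad (n + 1)), w r ≤ A * a n) (hD : ∀ n, a n ≤ D * a (n + 1)) :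
    ∫⁻ r in Ico 0 1, F r * w r ≤ A * D * ∑' n, F (dyad n) * a n := by
  have hblock : ∀ n, ∫⁻ r in Ico (dyad n) (dyad (n + 1)), F r * w r ≤
      A * D * (F (dyad (n + 1)) * a (n + 1)) := fun n => by
    have hsub : Ico (dyad n) (dyad (n + 1)) ⊆ Ico 0 1 :=
      Ico_subset_Ico (dyad_nonneg n) (dyad_lt_one _).le
    calc ∫⁻ r in Ico (dyad n) (dyad (n + 1)), F r * w r
        ≤ ∫⁻ r in Ico (dyad n) (dyad (n + 1)), F (dyad (n + 1)) * w r := by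
          refine setLIntegral_mono' measurableSet_Ico fun r hr => ?_
          gcongr
          exact hF (hsub hr) (dyad_mem_Ico _) hr.2.le
      _ = F (dyad (n + 1)) * ∫⁻ r in Ico (dyad n) (dyad (n + 1)), w r :=
          lintegral_const_mul'' _ (hw.mono_set hsub)
      _ ≤ F (dyad (n + 1)) * (A * (D * a (n + 1))) := by
          gcongr
          exact (hA n).trans (by gcongr; exact hD n)
      _ = _ := by ring
  calc ∫⁻ r in Ico 0 1, F r * w r ≤ ∑' n, A * D * (F (dyad (n + 1)) * a (n + 1)) := by
        rw [setLIntegral_Ico_eq_tsum_dyad]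
        exact ENNReal.tsum_le_tsum hblock
    _ ≤ A * D * ∑' n, F (dyad n) * a n := by
        rw [ENNReal.tsum_mul_left]
        exact mul_le_mul_right (ENNReal.tsum_comp_le_tsum_of_injective (add_left_injective 1)
          fun n => F (dyad n) * a n) _

theorem tsum_dyad_mul_le_mul_setLIntegral (hF : MonotoneOn F (Ico 0 1)) {k : ℕ}
    (hA : ∀ n, a n ≤ A * ∫⁻ r in Ico (dyad n) (dyad (n + k)), w r) :
    ∑' n, F (dyad n) * a n ≤ A * k * ∫⁻ r in Ico 0 1, F r * w r := by
  have hblock : ∀ n, F (dyad n) * a n ≤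
      A * ∫⁻ r in Ico (dyad n) (dyad (n + k)), F r * w r := fun n => by
    calc F (dyad n) * a n ≤ F (dyad n) * (A * ∫⁻ r in Ico (dyad n) (dyad (n + k)), w r) := by
          gcongr
          exact hA n
      _ = A * (F (dyad n) * ∫⁻ r in Ico (dyad n) (dyad (n + k)), w r) := mul_left_comm _ _ _
      _ ≤ A * ∫⁻ r in Ico (dyad n) (dyad (n + k)), F (dyad n) * w r := by
          gcongr
          exact lintegral_const_mul_le _ _
      _ ≤ A * ∫⁻ r in Ico (dyad n) (dyad (n + k)), F r * w r := by
          refine mul_le_mul_right (setLIntegral_mono' measurableSet_Ico fun r hr => ?_) A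
          gcongr
          exact hF (dyad_mem_Ico n) ⟨(dyad_nonneg n).trans hr.1, hr.2.trans (dyad_lt_one _)⟩ hr.1
  calc ∑' n, F (dyad n) * a n
      ≤ A * ∑' n, ∫⁻ r in Ico (dyad n) (dyad (n + k)), F r * w r := by
        rw [← ENNReal.tsum_mul_left]
        exact ENNReal.tsum_le_tsum hblock
    _ ≤ A * k * ∫⁻ r in Ico 0 1, F r * w r := by
        rw [mul_assoc]
        gcongr
        exact tsum_setLIntegral_Ico_dyad_le _ _

end DyadicSums

/-! ### Absorbing geometric factors -/

section GeometricAbsorption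

variable {a : ℕ → ℝ≥0∞} {c : ℝ≥0} {k : ℕ}

theorem exists_le_geometric_mul (ha : Antitone a) (hc : 1 < c) (hk : k ≠ 0)
    (h : ∀ n, c * a (n + k) ≤ a n) :
    ∃ ρ : ℝ≥0, 0 < ρ ∧ ρ < 1 ∧ ∀ n m, a (n + m) ≤ c * (ρ : ℝ≥0∞) ^ m * a n := by
  have hc0 : c ≠ 0 := (zero_lt_one.trans hc).ne'
  obtain ⟨ρ, hρ⟩ : ∃ ρ : ℝ≥0, ρ ^ k = c⁻¹ := ⟨c⁻¹ ^ (k : ℝ)⁻¹, NNReal.rpow_inv_natCast_pow _ hk⟩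
  have hρ0 : 0 < ρ := pos_iff_ne_zero.2 fun h0 => by simp [h0, hk, hc0, eq_comm] at hρ
  have hρ1 : ρ < 1 := (pow_lt_one_iff_of_nonneg zero_le hk).1 (hρ ▸ inv_lt_one_of_one_lt₀ hc)
  have hρc : (ρ : ℝ≥0∞) ^ k * c = 1 := by rw [← ENNReal.coe_pow, hρ, ← ENNReal.coe_mul,
    inv_mul_cancel₀ hc0, ENNReal.coe_one]
  have hstep : ∀ n i, a (n + k * i) ≤ (ρ : ℝ≥0∞) ^ (k * i) * a n := fun n i => by
    induction i with
    | zero => simp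
    | succ i ih =>
      calc a (n + k * (i + 1)) = (ρ : ℝ≥0∞) ^ k * (c * a (n + k * i + k)) := by
            rw [← mul_assoc, hρc, one_mul, mul_add_one, add_assoc]
        _ ≤ (ρ : ℝ≥0∞) ^ k * ((ρ : ℝ≥0∞) ^ (k * i) * a n) := by
            exact mul_le_mul_right ((h _).trans ih) _
        _ = (ρ : ℝ≥0∞) ^ (k * (i + 1)) * a n := by ring
  refine ⟨ρ, hρ0, hρ1, fun n m => ?_⟩
  calc a (n + m) ≤ a (n + k * (m / k)) := ha (by gcongr; exact Nat.mul_div_le m k)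
    _ ≤ (ρ : ℝ≥0∞) ^ (k * (m / k)) * a n := hstep n (m / k)
    _ = c * (ρ : ℝ≥0∞) ^ (k * (m / k) + k) * a n := by
        rw [pow_add, mul_left_comm, mul_comm (c : ℝ≥0∞), hρc, mul_one]
    _ ≤ c * (ρ : ℝ≥0∞) ^ m * a n := by
        have hm : m ≤ k * (m / k) + k := by
          linarith [Nat.div_add_mod m k, Nat.mod_lt m (Nat.pos_of_ne_zero hk)]
        have hpow := pow_le_pow_of_le_one (zero_le (a := (ρ : ℝ≥0∞))) (by exact_mod_cast hρ1.le) hm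
        exact mul_le_mul_left (mul_le_mul_right hpow _) _

theorem exists_tsum_pow_mul_le (ha : Antitone a) (hc : 1 < c) (hk : k ≠ 0)
    (h : ∀ n, c * a (n + k) ≤ a n) :
    ∃ q C : ℝ≥0, 1 < q ∧ ∀ n, ∑' m, (q : ℝ≥0∞) ^ m * a (n + m) ≤ C * a n := by
  obtain ⟨ρ, hρ0, hρ1, hρ⟩ := exists_le_geometric_mul ha hc hk h
  obtain ⟨q, hq1, hqρ⟩ : ∃ q : ℝ≥0, 1 < q ∧ q < ρ⁻¹ := exists_between ((one_lt_inv₀ hρ0).2 hρ1)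
  have hqρ1 : q * ρ < 1 := by rwa [← lt_div_iff₀ hρ0, one_div]
  refine ⟨q, c * (1 - q * ρ)⁻¹, hq1, fun n => ?_⟩
  calc ∑' m, (q : ℝ≥0∞) ^ m * a (n + m)
      ≤ ∑' m, (q * ρ : ℝ≥0∞) ^ m * (c * a n) := ENNReal.tsum_le_tsum fun m => calc
        (q : ℝ≥0∞) ^ m * a (n + m) ≤ (q : ℝ≥0∞) ^ m * (c * (ρ : ℝ≥0∞) ^ m * a n) := by
          gcongr
          exact hρ n m
        _ = (q * ρ : ℝ≥0∞) ^ m * (c * a n) := by ring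
    _ = (c * (1 - q * ρ)⁻¹ : ℝ≥0) * a n := by
        rw [ENNReal.tsum_mul_right, ENNReal.tsum_geometric, ENNReal.coe_mul,
          ENNReal.coe_inv (tsub_pos_of_lt hqρ1).ne']
        push_cast
        ring

theorem tsum_mul_sum_antidiagonal (a b s : ℕ → ℝ≥0∞) :
    ∑' n, (∑ ij ∈ Finset.HasAntidiagonal.antidiagonal n, b ij.1 * s ij.2) * a n =
      ∑' j, s j * ∑' i, b i * a (j + i) := by
  calc ∑' n, (∑ ij ∈ Finset.HasAntidiagonal.antidiagonal n, b ij.1 * s ij.2) * a n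
      = ∑' n, ∑' ij : Finset.HasAntidiagonal.antidiagonal n,
          b ij.1.1 * s ij.1.2 * a (ij.1.1 + ij.1.2) := by
        refine tsum_congr fun n => ?_
        rw [Finset.tsum_subtype (Finset.HasAntidiagonal.antidiagonal n)
          fun ij => b ij.1 * s ij.2 * a (ij.1 + ij.2), Finset.sum_mul]
        exact Finset.sum_congr rfl fun ij hij => by
          rw [Finset.HasAntidiagonal.mem_antidiagonal.1 hij]
    _ = ∑' ij : ℕ × ℕ, b ij.1 * s ij.2 * a (ij.1 + ij.2) := by
        rw [← Finset.HasAntidiagonal.sigmaAntidiagonalEquivProd.tsum_eq, ENNReal.tsum_sigma']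
        rfl
    _ = ∑' j, s j * ∑' i, b i * a (j + i) := by
        rw [ENNReal.tsum_prod', ENNReal.tsum_comm]
        simp only [← ENNReal.tsum_mul_left, add_comm, mul_left_comm, mul_assoc]

end GeometricAbsorption

/-! ### Tails of radial weights -/

section Tails

variable {ω : ℝ → ℝ}

theorem intervalIntegrable_of_radialWeight (hω : RadialWeight ω) {s t : ℝ} (hs : 0 ≤ s)
    (hst : s ≤ t) (ht : t ≤ 1) : IntervalIntegrable ω volume s t := by
  rw [intervalIntegrable_iff_integrableOn_Ico_of_le hst]
  exact hω.2.1.mono_set (Ico_subset_Ico hs ht)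

theorem integral_eq_tailInt_sub (hω : RadialWeight ω) {s t : ℝ} (hs : 0 ≤ s) (hst : s ≤ t)
    (ht : t ≤ 1) : ∫ r in s..t, ω r = tailInt ω s - tailInt ω t :=
  eq_sub_of_add_eq (intervalIntegral.integral_add_adjacent_intervals
    (intervalIntegrable_of_radialWeight hω hs hst ht)
    (intervalIntegrable_of_radialWeight hω (hs.trans hst) ht le_rfl))

theorem setLIntegral_radialWeight (hω : RadialWeight ω) {s t : ℝ} (hs : 0 ≤ s) (hst : s ≤ t)
    (ht : t ≤ 1) :
    ∫⁻ r in Ico s t, ENNReal.ofReal (ω r) = ENNReal.ofReal (tailInt ω s - tailInt ω t) := by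
  have hsub : Ico s t ⊆ Ico 0 1 := Ico_subset_Ico hs ht
  rw [← integral_eq_tailInt_sub hω hs hst ht, intervalIntegral.integral_of_le hst,
    ← integral_Ico_eq_integral_Ioc, ofReal_integral_eq_lintegral_ofReal (hω.2.1.mono_set hsub)]
  filter_upwards [ae_restrict_mem measurableSet_Ico] with r hr
  exact hω.1 r (hsub hr)

theorem tailInt_antitoneOn (hω : RadialWeight ω) : AntitoneOn (tailInt ω) (Icc 0 1) :=
  fun s hs t ht hst => sub_nonneg.1 <| by
    rw [← integral_eq_tailInt_sub hω hs.1 hst ht.2, intervalIntegral.integral_of_le hst,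
      ← integral_Ico_eq_integral_Ioc]
    exact setIntegral_nonneg measurableSet_Ico fun r hr => hω.1 r (Ico_subset_Ico hs.1 ht.2 hr)

theorem assocW_nonneg (hω : RadialWeight ω) {r : ℝ} (hr : r ∈ Ico (0 : ℝ) 1) : 0 ≤ assocW ω r :=
  div_nonneg (hω.2.2 r hr).le (sub_nonneg.2 hr.2.le)

theorem aemeasurable_assocW (hω : RadialWeight ω) :
    AEMeasurable (assocW ω) (volume.restrict (Ico 0 1)) :=
  (aemeasurable_restrict_of_antitoneOn measurableSet_Ico
    ((tailInt_antitoneOn hω).mono Ico_subset_Icc_self)).div (by fun_prop)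

/-- The dyadic tails `ω̂(1 - 2⁻ⁿ)`, as extended nonnegative numbers. -/
noncomputable def dyadTail (ω : ℝ → ℝ) (n : ℕ) : ℝ≥0∞ := ENNReal.ofReal (tailInt ω (dyad n))

theorem dyad_mem_Icc (n : ℕ) : dyad n ∈ Icc 0 1 := Ico_subset_Icc_self (dyad_mem_Ico n)

theorem dyadTail_antitone (hω : RadialWeight ω) : Antitone (dyadTail ω) := fun _ _ h =>
  ENNReal.ofReal_le_ofReal (tailInt_antitoneOn hω (dyad_mem_Icc _) (dyad_mem_Icc _)
    (dyad_strictMono.monotone h))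

theorem setLIntegral_Ico_dyad_add_dyadTail (hω : RadialWeight ω) (n k : ℕ) :
    (∫⁻ r in Ico (dyad n) (dyad (n + k)), ENNReal.ofReal (ω r)) + dyadTail ω (n + k) =
      dyadTail ω n := by
  have hle : dyad n ≤ dyad (n + k) := dyad_strictMono.monotone (Nat.le_add_right n k)
  rw [setLIntegral_radialWeight hω (dyad_nonneg n) hle (dyad_lt_one _).le, dyadTail,
    ← ENNReal.ofReal_add
      (sub_nonneg.2 (tailInt_antitoneOn hω (dyad_mem_Icc _) (dyad_mem_Icc _) hle))
      (hω.2.2 _ (dyad_mem_Ico _)).le, sub_add_cancel, dyadTail]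

theorem setLIntegral_Ico_dyad_le_dyadTail (hω : RadialWeight ω) (n : ℕ) :
    ∫⁻ r in Ico (dyad n) (dyad (n + 1)), ENNReal.ofReal (ω r) ≤ dyadTail ω n :=
  le_self_add.trans (setLIntegral_Ico_dyad_add_dyadTail hω n 1).le

theorem exists_dyadTail_le_mul_succ (hD : Dhat ω) :
    ∃ D : ℝ≥0, ∀ n, dyadTail ω n ≤ D * dyadTail ω (n + 1) := by
  obtain ⟨C, hC, h⟩ := hD
  refine ⟨C.toNNReal, fun n => ?_⟩
  rw [dyadTail, dyadTail, dyad_succ, ← ENNReal.ofReal, ← ENNReal.ofReal_mul (zero_le_one.trans hC)]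
  exact ENNReal.ofReal_le_ofReal (h _ (dyad_mem_Ico n))

theorem exists_mul_dyadTail_add_le (hω : RadialWeight ω) (hD : Dcheck ω) :
    ∃ (c : ℝ≥0) (k : ℕ), 1 < c ∧ k ≠ 0 ∧ ∀ n, c * dyadTail ω (n + k) ≤ dyadTail ω n := by
  obtain ⟨K, C, hK, hC, h⟩ := hD
  obtain ⟨k, hk⟩ := pow_unbounded_of_one_lt K (one_lt_two (α := ℝ))
  refine ⟨C.toNNReal, k, by simpa using hC, ?_, fun n => ?_⟩
  · rintro rfl
    linarith [pow_zero (2 : ℝ)]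
  have hle : 1 - (1 - dyad n) / K ≤ dyad (n + k) := by
    have hpow : (1 / 2 : ℝ) ^ k ≤ 1 / K := by
      rw [one_div_pow]
      exact one_div_le_one_div_of_le (by linarith) hk.le
    have := mul_le_mul_of_nonneg_left hpow (by positivity : (0 : ℝ) ≤ (1 / 2) ^ n)
    simp only [dyad, sub_sub_cancel, pow_add]
    linarith [mul_one_div ((1 / 2 : ℝ) ^ n) K]
  have hmem : 1 - (1 - dyad n) / K ∈ Icc (0 : ℝ) 1 := by
    have := dyad_mem_Ico n
    have : (1 - dyad n) / K ≤ 1 := (div_le_one (by linarith)).2 (by linarith [this.1])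
    exact ⟨by linarith, sub_le_self _ (div_nonneg (by linarith [dyad_lt_one n]) (by linarith))⟩
  rw [dyadTail, dyadTail, ← ENNReal.ofReal, ← ENNReal.ofReal_mul (by linarith)]
  refine ENNReal.ofReal_le_ofReal (le_trans ?_ (h _ (dyad_mem_Ico n)))
  gcongr
  exact tailInt_antitoneOn hω hmem (dyad_mem_Icc _) hle

theorem dyadTail_le_mul_setLIntegral (hω : RadialWeight ω) {c : ℝ≥0} {k : ℕ} (hc : 1 < c)
    (h : ∀ n, c * dyadTail ω (n + k) ≤ dyadTail ω n) (n : ℕ) :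
    dyadTail ω n ≤ (1 - c⁻¹ : ℝ≥0)⁻¹ *
      ∫⁻ r in Ico (dyad n) (dyad (n + k)), ENNReal.ofReal (ω r) := by
  have hc0 : c ≠ 0 := (zero_lt_one.trans hc).ne'
  have hδ : (1 - c⁻¹ : ℝ≥0) ≠ 0 := (tsub_pos_of_lt (inv_lt_one_of_one_lt₀ hc)).ne'
  have htail : dyadTail ω (n + k) ≤ (c⁻¹ : ℝ≥0) * dyadTail ω n := calc
    dyadTail ω (n + k) = (c⁻¹ : ℝ≥0) * (c * dyadTail ω (n + k)) := by
      rw [← mul_assoc, ← ENNReal.coe_mul, inv_mul_cancel₀ hc0, ENNReal.coe_one, one_mul]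
    _ ≤ _ := by
      gcongr
      exact h n
  have hsub : (1 - c⁻¹ : ℝ≥0) * dyadTail ω n ≤
      ∫⁻ r in Ico (dyad n) (dyad (n + k)), ENNReal.ofReal (ω r) := by
    have hfin : dyadTail ω n ≠ ∞ := ENNReal.ofReal_ne_top
    rw [ENNReal.coe_sub, ENNReal.sub_mul fun _ _ => hfin, ENNReal.coe_one, one_mul,
      tsub_le_iff_right]
    calc dyadTail ω n = _ := (setLIntegral_Ico_dyad_add_dyadTail hω n k).symm
      _ ≤ _ := by gcongr
  calc dyadTail ω n = (1 - c⁻¹ : ℝ≥0)⁻¹ * ((1 - c⁻¹ : ℝ≥0) * dyadTail ω n) := by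
        rw [← mul_assoc, ← ENNReal.coe_mul, inv_mul_cancel₀ hδ, ENNReal.coe_one, one_mul]
    _ ≤ _ := by gcongr

theorem one_sub_dyad (n : ℕ) : 1 - dyad n = (1 / 2) ^ n := sub_sub_cancel _ _

theorem volume_Ico_dyad (n : ℕ) :
    volume (Ico (dyad n) (dyad (n + 1))) = ENNReal.ofReal ((1 / 2) ^ n / 2) := by
  rw [Real.volume_Ico, dyad, dyad, pow_succ]
  ring_nf

theorem setLIntegral_assocW_Ico_dyad_le (hω : RadialWeight ω) (n : ℕ) :
    ∫⁻ r in Ico (dyad n) (dyad (n + 1)), ENNReal.ofReal (assocW ω r) ≤ dyadTail ω n := by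
  have hδ : (0 : ℝ) < (1 / 2) ^ n / 2 := by positivity
  calc ∫⁻ r in Ico (dyad n) (dyad (n + 1)), ENNReal.ofReal (assocW ω r)
      ≤ ∫⁻ r in Ico (dyad n) (dyad (n + 1)),
          ENNReal.ofReal (tailInt ω (dyad n) / ((1 / 2) ^ n / 2)) := by
        refine setLIntegral_mono' measurableSet_Ico fun r hr => ENNReal.ofReal_le_ofReal ?_
        refine div_le_div₀ (hω.2.2 _ (dyad_mem_Ico n)).le (tailInt_antitoneOn hω (dyad_mem_Icc n)
          ⟨(dyad_nonneg n).trans hr.1, (hr.2.trans (dyad_lt_one _)).le⟩ hr.1) hδ ?_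
        linarith [one_sub_dyad (n + 1), pow_succ (1 / 2 : ℝ) n, hr.2]
    _ = dyadTail ω n := by
        rw [setLIntegral_const, volume_Ico_dyad, ← ENNReal.ofReal_mul' hδ.le,
          div_mul_cancel₀ _ hδ.ne', dyadTail]

theorem dyadTail_succ_le_mul_setLIntegral_assocW (hω : RadialWeight ω) (n : ℕ) :
    dyadTail ω (n + 1) ≤
      2 * ∫⁻ r in Ico (dyad n) (dyad (n + 1)), ENNReal.ofReal (assocW ω r) := by
  have : (0 : ℝ) < (1 / 2) ^ n := by positivity
  calc dyadTail ω (n + 1)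
      = 2 * ∫⁻ r in Ico (dyad n) (dyad (n + 1)),
          ENNReal.ofReal (tailInt ω (dyad (n + 1)) / (1 / 2) ^ n) := by
        rw [setLIntegral_const, volume_Ico_dyad, ← ENNReal.ofReal_mul' (by positivity),
          ← ENNReal.ofReal_ofNat, ← ENNReal.ofReal_mul zero_le_two, dyadTail]
        field_simp
    _ ≤ _ := by
        refine mul_le_mul_right (setLIntegral_mono' measurableSet_Ico fun r hr =>
          ENNReal.ofReal_le_ofReal ?_) _
        have hr01 : r ∈ Ico (0 : ℝ) 1 := ⟨(dyad_nonneg n).trans hr.1, hr.2.trans (dyad_lt_one _)⟩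
        refine div_le_div₀ (hω.2.2 r hr01).le (tailInt_antitoneOn hω
          (Ico_subset_Icc_self hr01) (dyad_mem_Icc _) hr.2.le) (sub_pos.2 hr01.2) ?_
        linarith [one_sub_dyad n, hr.1]

end Tails

/-! ### The comparison for weights in `D` -/

section Comparison

/-- `X` and `Y` are comparable on `s`: each is at most a constant multiple of the other, with one
constant for all members of `s`. The values are in `ℝ≥0∞`, so that infinite quantities are covered:
comparable quantities are infinite simultaneously. -/
def ComparableOn {ι : Type*} (s : Set ι) (X Y : ι → ℝ≥0∞) : Prop :=
  ∃ C : ℝ≥0, ∀ i ∈ s, X i ≤ C * Y i ∧ Y i ≤ C * X i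

variable {ι : Type*} {s : Set ι} {X Y Z : ι → ℝ≥0∞}

theorem ComparableOn.of_le_of_le {A B : ℝ≥0} (hA : ∀ i ∈ s, X i ≤ A * Y i)
    (hB : ∀ i ∈ s, Y i ≤ B * X i) : ComparableOn s X Y :=
  ⟨max A B, fun i hi => ⟨(hA i hi).trans (by gcongr; exact le_max_left A B),
    (hB i hi).trans (by gcongr; exact le_max_right A B)⟩⟩

theorem ComparableOn.symm (h : ComparableOn s X Y) : ComparableOn s Y X :=
  h.imp fun _ hC i hi => (hC i hi).symm

theorem ComparableOn.trans (hXY : ComparableOn s X Y) (hYZ : ComparableOn s Y Z) :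
    ComparableOn s X Z := by
  obtain ⟨A, hA⟩ := hXY
  obtain ⟨B, hB⟩ := hYZ
  refine ⟨A * B, fun i hi => ⟨(hA i hi).1.trans ?_, (hB i hi).2.trans ?_⟩⟩
  · rw [ENNReal.coe_mul, mul_assoc]
    gcongr
    exact (hB i hi).1
  · rw [ENNReal.coe_mul, mul_comm (A : ℝ≥0∞), mul_assoc]
    gcongr
    exact (hA i hi).2

theorem toReal_le_mul_toReal {C : ℝ≥0} {a b : ℝ≥0∞} (hab : a ≤ C * b) (hba : b ≤ C * a) :
    a.toReal ≤ C * b.toReal := by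
  rcases eq_or_ne b ∞ with rfl | hb
  · have ha : a = ∞ := by
      by_contra ha
      exact (ENNReal.mul_lt_top ENNReal.coe_lt_top (Ne.lt_top ha)).not_ge hba
    simp [ha]
  · simpa using ENNReal.toReal_mono (ENNReal.mul_ne_top ENNReal.coe_ne_top hb) hab

theorem exists_toReal_le_of_comparableOn {κ : Type*} [Finite κ] {X : κ → ι → ℝ≥0∞}
    (h : ∀ k, ComparableOn s (X k) Y) :
    ∃ C : ℝ, 1 ≤ C ∧ ∀ j k, ∀ i ∈ s, (X j i).toReal ≤ C * (X k i).toReal := by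
  choose C hC using fun j k => (h j).trans (h k).symm
  obtain ⟨M, hM⟩ := (finite_range fun jk : κ × κ => C jk.1 jk.2).bddAbove
  refine ⟨max 1 M, le_max_left _ _, fun j k i hi => ?_⟩
  have hle : C j k ≤ max 1 M := (hM ⟨(j, k), rfl⟩).trans (le_max_right _ _)
  calc (X j i).toReal ≤ C j k * (X k i).toReal :=
        toReal_le_mul_toReal (hC j k i hi).1 (hC j k i hi).2
    _ ≤ max 1 M * (X k i).toReal := by
        gcongr

/-- The analytic functions on the unit disc whose value at the origin is real. -/
def analyticRealAtZero : Set (ℂ → ℂ) := {f | DifferentiableOn ℂ f (ball 0 1) ∧ (f 0).im = 0}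

/-- `‖f‖_{A^p_ω}^p` in polar coordinates, as an extended nonnegative number. -/
noncomputable def bergmanLInt (p : ℝ) (ω : ℝ → ℝ) (f : ℂ → ℂ) : ℝ≥0∞ :=
  2 * ∫⁻ r in Ico 0 1,
    ENNReal.ofReal r * circleLAverage (fun z => ‖f z‖ₑ ^ p) 0 r * ENNReal.ofReal (ω r)

/-- The integral `∫₀¹ (sup_{0<s<r} M_p^p(s, Re f)) v(r) dr` as an extended nonnegative number. -/
noncomputable def supLInt (p : ℝ) (v : ℝ → ℝ) (f : ℂ → ℂ) : ℝ≥0∞ :=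
  ∫⁻ r in Ico 0 1, supReMean p f r * ENNReal.ofReal (v r)

/-- The dyadic sum to which all the integrals of the theorem are compared. -/
noncomputable def supDyadSum (p : ℝ) (ω : ℝ → ℝ) (f : ℂ → ℂ) : ℝ≥0∞ :=
  ∑' n, supReMean p f (dyad n) * dyadTail ω n

variable {p : ℝ} {ω : ℝ → ℝ}

theorem comparableOn_supLInt_supDyadSum (hω : RadialWeight ω) (hhat : Dhat ω) (hcheck : Dcheck ω)
    (S : Set (ℂ → ℂ)) : ComparableOn S (supLInt p ω) (supDyadSum p ω) := by
  obtain ⟨D, hD⟩ := exists_dyadTail_le_mul_succ hhat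
  obtain ⟨c, k, hc, -, hck⟩ := exists_mul_dyadTail_add_le hω hcheck
  refine .of_le_of_le (A := 1 * D) (B := (1 - c⁻¹)⁻¹ * k) (fun f _ => ?_) fun f _ => ?_
  · push_cast
    exact setLIntegral_mul_le_mul_tsum_dyad ((supReMean_mono p f).monotoneOn _)
      hω.2.1.aestronglyMeasurable.aemeasurable.ennreal_ofReal
      (fun n => by simpa using setLIntegral_Ico_dyad_le_dyadTail hω n) hD
  · push_cast
    exact tsum_dyad_mul_le_mul_setLIntegral ((supReMean_mono p f).monotoneOn _)
      (dyadTail_le_mul_setLIntegral hω hc hck)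

theorem comparableOn_supLInt_assocW_supDyadSum (hω : RadialWeight ω) (hhat : Dhat ω)
    (S : Set (ℂ → ℂ)) : ComparableOn S (supLInt p (assocW ω)) (supDyadSum p ω) := by
  obtain ⟨D, hD⟩ := exists_dyadTail_le_mul_succ hhat
  refine .of_le_of_le (A := 1 * D) (B := D * 2 * (1 : ℕ)) (fun f _ => ?_) fun f _ => ?_
  · push_cast
    exact setLIntegral_mul_le_mul_tsum_dyad ((supReMean_mono p f).monotoneOn _)
      (aemeasurable_assocW hω).ennreal_ofReal
      (fun n => by simpa using setLIntegral_assocW_Ico_dyad_le hω n) hD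
  · rw [ENNReal.coe_mul, ENNReal.coe_natCast]
    refine tsum_dyad_mul_le_mul_setLIntegral ((supReMean_mono p f).monotoneOn _) fun n => ?_
    rw [ENNReal.coe_mul, mul_assoc]
    refine (hD n).trans ?_
    gcongr
    exact dyadTail_succ_le_mul_setLIntegral_assocW hω n

theorem monotoneOn_circleLAverage_enorm_rpow (hp : 0 < p) {f : ℂ → ℂ}
    (hf : DifferentiableOn ℂ f (ball 0 1)) :
    MonotoneOn (circleLAverage (fun z => ‖f z‖ₑ ^ p) 0) (Ico 0 1) :=
  fun _ hs _ hr hsr => circleLAverage_enorm_rpow_mono hp hf hs.1 hsr hr.2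

theorem exists_tsum_circleLAverage_le_supDyadSum (hp : 0 < p) (hω : RadialWeight ω) (hhat : Dhat ω)
    (hcheck : Dcheck ω) : ∃ C : ℝ≥0, ∀ f ∈ analyticRealAtZero,
      ∑' n, circleLAverage (fun z => ‖f z‖ₑ ^ p) 0 (dyad n) * dyadTail ω n ≤
        C * supDyadSum p ω f := by
  obtain ⟨D, hD⟩ := exists_dyadTail_le_mul_succ hhat
  obtain ⟨c, k, hc, hk, hck⟩ := exists_mul_dyadTail_add_le hω hcheck
  obtain ⟨q, A, hq, hA⟩ := exists_tsum_pow_mul_le (dyadTail_antitone hω) hc hk hck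
  obtain ⟨B, hB⟩ := exists_circleLAverage_dyad_le hp hq
  refine ⟨B * (A * D), fun f hf => ?_⟩
  calc ∑' n, circleLAverage (fun z => ‖f z‖ₑ ^ p) 0 (dyad n) * dyadTail ω n
      ≤ ∑' n, B * ((∑ ij ∈ Finset.HasAntidiagonal.antidiagonal n,
          (q : ℝ≥0∞) ^ ij.1 * supReMean p f (dyad (ij.2 + 1))) * dyadTail ω n) :=
        ENNReal.tsum_le_tsum fun n => by
          rw [← mul_assoc]
          gcongr
          exact hB f hf.1 hf.2 n
    _ = B * ∑' j, supReMean p f (dyad (j + 1)) * ∑' i, (q : ℝ≥0∞) ^ i * dyadTail ω (j + i) := by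
        rw [ENNReal.tsum_mul_left, tsum_mul_sum_antidiagonal _ (fun i => (q : ℝ≥0∞) ^ i)
          fun j => supReMean p f (dyad (j + 1))]
    _ ≤ B * ∑' j, supReMean p f (dyad (j + 1)) * (A * (D * dyadTail ω (j + 1))) := by
        gcongr with j
        exact (hA j).trans (by gcongr; exact hD j)
    _ = B * (A * D) * ∑' j, supReMean p f (dyad (j + 1)) * dyadTail ω (j + 1) := by
        simp only [← ENNReal.tsum_mul_left]
        exact tsum_congr fun j => by ring
    _ ≤ (B * (A * D) : ℝ≥0) * supDyadSum p ω f := by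
        push_cast
        exact mul_le_mul_right (ENNReal.tsum_comp_le_tsum_of_injective (add_left_injective 1)
          fun n => supReMean p f (dyad n) * dyadTail ω n) _

theorem exists_bergmanLInt_le_supDyadSum (hp : 0 < p) (hω : RadialWeight ω) (hhat : Dhat ω)
    (hcheck : Dcheck ω) :
    ∃ C : ℝ≥0, ∀ f ∈ analyticRealAtZero, bergmanLInt p ω f ≤ C * supDyadSum p ω f := by
  obtain ⟨D, hD⟩ := exists_dyadTail_le_mul_succ hhat
  obtain ⟨C, hC⟩ := exists_tsum_circleLAverage_le_supDyadSum hp hω hhat hcheck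
  refine ⟨2 * (D * C), fun f hf => ?_⟩
  rw [bergmanLInt, ENNReal.coe_mul, ENNReal.coe_ofNat, mul_assoc]
  gcongr
  calc ∫⁻ r in Ico 0 1,
        ENNReal.ofReal r * circleLAverage (fun z => ‖f z‖ₑ ^ p) 0 r * ENNReal.ofReal (ω r)
      ≤ ∫⁻ r in Ico 0 1, circleLAverage (fun z => ‖f z‖ₑ ^ p) 0 r * ENNReal.ofReal (ω r) :=
        setLIntegral_mono' measurableSet_Ico fun r hr => by
          gcongr
          exact mul_le_of_le_one_left' (ENNReal.ofReal_le_one.2 hr.2.le)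
    _ ≤ 1 * D * ∑' n, circleLAverage (fun z => ‖f z‖ₑ ^ p) 0 (dyad n) * dyadTail ω n := by
        exact setLIntegral_mul_le_mul_tsum_dyad (monotoneOn_circleLAverage_enorm_rpow hp hf.1)
          hω.2.1.aestronglyMeasurable.aemeasurable.ennreal_ofReal
          (fun n => by simpa using setLIntegral_Ico_dyad_le_dyadTail hω n) hD
    _ ≤ (D * C : ℝ≥0) * supDyadSum p ω f := by
        rw [one_mul, ENNReal.coe_mul, mul_assoc]
        gcongr
        exact hC f hf

theorem supReMean_dyad_le (hp : 0 < p) {f : ℂ → ℂ} (hf : DifferentiableOn ℂ f (ball 0 1)) (n : ℕ) :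
    supReMean p f (dyad n) ≤
      2 * (ENNReal.ofReal (dyad n) * circleLAverage (fun z => ‖f z‖ₑ ^ p) 0 (dyad n)) := by
  cases n with
  | zero => simp [supReMean, dyad_zero]
  | succ n =>
    have hdyad : 1 ≤ 2 * ENNReal.ofReal (dyad (n + 1)) := by
      rw [← ENNReal.ofReal_ofNat, ← ENNReal.ofReal_mul zero_le_two, ENNReal.one_le_ofReal,
        dyad_succ]
      linarith [dyad_nonneg n]
    rw [← mul_assoc]
    exact (supReMean_le_circleLAverage hp hf (dyad_lt_one _)).trans (le_mul_of_one_le_left' hdyad)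

theorem exists_supDyadSum_le_bergmanLInt (hp : 0 < p) (hω : RadialWeight ω) (hcheck : Dcheck ω) :
    ∃ C : ℝ≥0, ∀ f, DifferentiableOn ℂ f (ball 0 1) →
      supDyadSum p ω f ≤ C * bergmanLInt p ω f := by
  obtain ⟨c, k, hc, -, hck⟩ := exists_mul_dyadTail_add_le hω hcheck
  refine ⟨(1 - c⁻¹)⁻¹ * k, fun f hf => ?_⟩
  set F : ℝ → ℝ≥0∞ := fun r => ENNReal.ofReal r * circleLAverage (fun z => ‖f z‖ₑ ^ p) 0 r
  have hFmono : MonotoneOn F (Ico 0 1) := fun s hs r hr hsr =>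
    mul_le_mul' (ENNReal.ofReal_le_ofReal hsr)
      (monotoneOn_circleLAverage_enorm_rpow hp hf hs hr hsr)
  calc supDyadSum p ω f ≤ ∑' n, 2 * (F (dyad n) * dyadTail ω n) :=
        ENNReal.tsum_le_tsum fun n => by
          rw [← mul_assoc]
          gcongr
          exact supReMean_dyad_le hp hf n
    _ ≤ 2 * (((1 - c⁻¹)⁻¹ : ℝ≥0) * k * ∫⁻ r in Ico 0 1, F r * ENNReal.ofReal (ω r)) := by
        rw [ENNReal.tsum_mul_left]
        gcongr
        exact tsum_dyad_mul_le_mul_setLIntegral hFmono (dyadTail_le_mul_setLIntegral hω hc hck)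
    _ = ((1 - c⁻¹)⁻¹ * k : ℝ≥0) * bergmanLInt p ω f := by
        rw [bergmanLInt]
        push_cast
        ring

theorem comparableOn_bergmanLInt_supDyadSum (hp : 0 < p) (hω : RadialWeight ω) (hhat : Dhat ω)
    (hcheck : Dcheck ω) :
    ComparableOn analyticRealAtZero (bergmanLInt p ω) (supDyadSum p ω) := by
  obtain ⟨A, hA⟩ := exists_bergmanLInt_le_supDyadSum hp hω hhat hcheck
  obtain ⟨B, hB⟩ := exists_supDyadSum_le_bergmanLInt hp hω hcheck
  exact .of_le_of_le hA fun f hf => hB f hf.1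

end Comparison

/-! ### The quantities of the theorem as Lebesgue integrals -/

section Lebesgue

theorem quasiMeasurePreserving_dist (c : ℂ) (R : ℝ) :
    Measure.QuasiMeasurePreserving (fun z => dist z c) (volume.restrict (ball c R))
      (volume.restrict (Ioo 0 R)) := by
  have hdist : Measurable fun z : ℂ => dist z c := by fun_prop
  refine ⟨hdist, .mk fun s hs hs0 => ?_⟩
  have hpolar := setLIntegral_ball_mul_radial (F := fun _ => 1) (w := s.indicator 1)
    (c := c) (R := R) continuousOn_const (measurable_one.indicator hs).aemeasurable
  have hzero : ∫⁻ t in Ioo 0 R, ENNReal.ofReal t * circleLAverage (fun _ => 1) c t *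
      s.indicator 1 t = 0 := by
    refine lintegral_eq_zero_of_ae_eq_zero ?_
    filter_upwards [measure_eq_zero_iff_ae_notMem.1 hs0] with t ht
    rw [indicator_of_notMem ht, mul_zero, Pi.zero_apply]
  rw [hzero, mul_zero] at hpolar
  rw [Measure.map_apply hdist hs, ← lintegral_indicator_one (hdist hs), ← hpolar]
  exact lintegral_congr fun z => (one_mul _).symm

variable {p : ℝ} {ω : ℝ → ℝ} {f : ℂ → ℂ}

theorem ApNorm_eq_toReal (hp : 0 < p) (hω : RadialWeight ω) (hf : ContinuousOn f (ball 0 1)) :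
    ApNorm p ω f = (bergmanLInt p ω f).toReal := by
  have hωm : AEMeasurable ω (volume.restrict (Ioo 0 1)) :=
    (hω.2.1.mono_set Ioo_subset_Ico_self).aestronglyMeasurable.aemeasurable
  have hω0 : ∀ z ∈ ball (0 : ℂ) 1, 0 ≤ ω (dist z 0) := fun z hz => hω.1 _ ⟨dist_nonneg, hz⟩
  have hfp : ContinuousOn (fun z => ‖f z‖ ^ p) (ball 0 1) :=
    hf.norm.rpow_const fun _ _ => .inr hp.le
  have hpolar : ∫⁻ z in ball (0 : ℂ) 1, ENNReal.ofReal (‖f z‖ ^ p * ω (dist z 0)) =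
      ENNReal.ofReal Real.pi * bergmanLInt p ω f := by
    rw [bergmanLInt, ← mul_assoc, ← ENNReal.ofReal_ofNat 2, ← ENNReal.ofReal_mul Real.pi_pos.le,
      mul_comm Real.pi, ← Measure.restrict_congr_set Ioo_ae_eq_Ico]
    refine Eq.trans ?_ (setLIntegral_ball_mul_radial (F := fun z => ‖f z‖ₑ ^ p)
      (ENNReal.continuous_rpow_const.comp_continuousOn hf.enorm) hωm.ennreal_ofReal)
    refine setLIntegral_congr_fun measurableSet_ball fun z hz => ?_
    rw [ENNReal.ofReal_mul' (hω0 z hz), ofReal_norm_rpow _ hp.le]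
  simp only [ApNorm, ← dist_zero_right]
  simp only [dist_zero_right (f _)]
  rw [integral_eq_lintegral_of_nonneg_ae, hpolar, ENNReal.toReal_mul,
    ENNReal.toReal_ofReal Real.pi_pos.le, inv_mul_cancel_left₀ Real.pi_ne_zero]
  · filter_upwards [ae_restrict_mem measurableSet_ball] with z hz
    exact mul_nonneg (by positivity) (hω0 z hz)
  · exact ((hfp.aemeasurable measurableSet_ball).mul
      (hωm.comp_quasiMeasurePreserving (quasiMeasurePreserving_dist 0 1))).aestronglyMeasurable

theorem sphere_abs_subset_ball {s R : ℝ} (hs : s ∈ Ico 0 R) : sphere (0 : ℂ) |s| ⊆ ball 0 R := by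
  rw [abs_of_nonneg hs.1]
  exact sphere_subset_ball hs.2

theorem Mpp_eq_circleAverage (p : ℝ) (f : ℂ → ℂ) (s : ℝ) :
    Mpp p f s = Real.circleAverage (fun z => ‖(f z).re‖ ^ p) 0 s := by
  simp only [Mpp, Real.circleAverage_def, circleMap, zero_add, smul_eq_mul, Real.norm_eq_abs]

theorem Mpp_nonneg (p : ℝ) (f : ℂ → ℂ) (s : ℝ) : 0 ≤ Mpp p f s :=
  mul_nonneg (by positivity) (intervalIntegral.integral_nonneg Real.two_pi_pos.le
    fun _ _ => by positivity)

theorem ofReal_Mpp (hp : 0 < p) (hf : ContinuousOn f (ball 0 1)) {s : ℝ} (hs : s ∈ Ico 0 1) :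
    ENNReal.ofReal (Mpp p f s) = circleLAverage (fun z => ‖(f z).re‖ₑ ^ p) 0 s := by
  rw [Mpp_eq_circleAverage]
  exact ofReal_circleAverage_norm_rpow hp.le
    (Complex.continuous_re.comp_continuousOn (hf.mono (sphere_abs_subset_ball hs)))

theorem supMpp_eq_toReal (hp : 0 < p) (hf : ContinuousOn f (ball 0 1)) {r : ℝ} (hr : r ≤ 1) :
    supMpp p f r = (supReMean p f r).toReal := by
  have hmem : ∀ s ∈ Ioo 0 r, s ∈ Ico (0 : ℝ) 1 := fun s hs => ⟨hs.1.le, hs.2.trans_le hr⟩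
  rw [supReMean, ← sSup_image, ENNReal.toReal_sSup, supMpp, image_image]
  · refine congrArg sSup (image_congr fun s hs => ?_)
    rw [← ofReal_Mpp hp hf (hmem s hs), ENNReal.toReal_ofReal (Mpp_nonneg p f s)]
  · rintro _ ⟨s, hs, rfl⟩
    rw [← ofReal_Mpp hp hf (hmem s hs)]
    exact ENNReal.ofReal_ne_top

theorem circleLAverage_enorm_rpow_ne_top (hp : 0 < p) (hf : ContinuousOn f (ball 0 1)) {r : ℝ}
    (hr : r ∈ Ico 0 1) : circleLAverage (fun z => ‖f z‖ₑ ^ p) 0 r ≠ ∞ := by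
  rw [← ofReal_circleAverage_norm_rpow hp.le (hf.mono (sphere_abs_subset_ball hr))]
  exact ENNReal.ofReal_ne_top

theorem ofReal_supMpp (hp : 0 < p) (hf : DifferentiableOn ℂ f (ball 0 1)) {r : ℝ}
    (hr : r ∈ Ico 0 1) : ENNReal.ofReal (supMpp p f r) = supReMean p f r := by
  rw [supMpp_eq_toReal hp hf.continuousOn hr.2.le, ENNReal.ofReal_toReal]
  exact ne_top_of_le_ne_top (circleLAverage_enorm_rpow_ne_top hp hf.continuousOn hr)
    (supReMean_le_circleLAverage hp hf hr.2)

theorem integral_supMpp_mul_eq_toReal (hp : 0 < p) (hf : DifferentiableOn ℂ f (ball 0 1))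
    {v : ℝ → ℝ} (hv : AEMeasurable v (volume.restrict (Ico 0 1))) (hv0 : ∀ r ∈ Ico 0 1, 0 ≤ v r) :
    ∫ r in 0..1, supMpp p f r * v r = (supLInt p v f).toReal := by
  have hsup : ∀ r ∈ Ico (0 : ℝ) 1, (supReMean p f r).toReal = supMpp p f r := fun r hr =>
    (supMpp_eq_toReal hp hf.continuousOn hr.2.le).symm
  have hmeas : AEMeasurable (supMpp p f) (volume.restrict (Ico 0 1)) :=
    (supReMean_mono p f).measurable.ennreal_toReal.aemeasurable.congr
      (by filter_upwards [ae_restrict_mem measurableSet_Ico] using hsup)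
  rw [intervalIntegral.integral_of_le zero_le_one, ← integral_Ico_eq_integral_Ioc,
    integral_eq_lintegral_of_nonneg_ae, supLInt]
  · refine congrArg _ (setLIntegral_congr_fun measurableSet_Ico fun r hr => ?_)
    rw [ENNReal.ofReal_mul' (hv0 r hr), ofReal_supMpp hp hf hr]
  · filter_upwards [ae_restrict_mem measurableSet_Ico] with r hr
    rw [← hsup r hr]
    exact mul_nonneg ENNReal.toReal_nonneg (hv0 r hr)
  · exact (hmeas.mul hv).aestronglyMeasurable

theorem integrableOn_assocW (hω : RadialWeight ω) (hhat : Dhat ω) (hcheck : Dcheck ω) :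
    IntegrableOn (assocW ω) (Ico 0 1) := by
  obtain ⟨D, hD⟩ := exists_dyadTail_le_mul_succ hhat
  obtain ⟨c, k, hc, -, hck⟩ := exists_mul_dyadTail_add_le hω hcheck
  have hone : MonotoneOn (fun _ : ℝ => (1 : ℝ≥0∞)) (Ico 0 1) := monotone_const.monotoneOn _
  refine ⟨(aemeasurable_assocW hω).aestronglyMeasurable, ?_⟩
  rw [hasFiniteIntegral_iff_ofReal
    ((ae_restrict_mem measurableSet_Ico).mono fun r hr => assocW_nonneg hω hr)]
  calc ∫⁻ r in Ico 0 1, ENNReal.ofReal (assocW ω r) ≤ 1 * D * ∑' n, dyadTail ω n := by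
        simpa only [one_mul] using setLIntegral_mul_le_mul_tsum_dyad (A := 1) hone
          (aemeasurable_assocW hω).ennreal_ofReal
          (fun n => by simpa using setLIntegral_assocW_Ico_dyad_le hω n) hD
    _ ≤ 1 * D * (((1 - c⁻¹)⁻¹ : ℝ≥0) * k * ∫⁻ r in Ico 0 1, ENNReal.ofReal (ω r)) := by
        gcongr
        simpa only [one_mul] using tsum_dyad_mul_le_mul_setLIntegral hone
          (dyadTail_le_mul_setLIntegral hω hc hck)
    _ < ∞ := by
        rw [setLIntegral_radialWeight hω le_rfl zero_le_one le_rfl]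
        finiteness

end Lebesgue

/-! ### Moments of radial weights -/

section Moments

variable {v ω : ℝ → ℝ} {x y : ℝ}

/-- The moment `∫₀¹ r^x v(r) dr` of a function on `[0, 1)`. -/
noncomputable def radialMoment (v : ℝ → ℝ) (x : ℝ) : ℝ := ∫ r in 0..1, r ^ x * v r

theorem intervalIntegrable_rpow_mul (hv : IntervalIntegrable v volume 0 1) (hx : 0 ≤ x) :
    IntervalIntegrable (fun r => r ^ x * v r) volume 0 1 :=
  hv.continuousOn_mul (Real.continuous_rpow_const hx).continuousOn

theorem radialMoment_nonneg (hv0 : ∀ r ∈ Ico 0 1, 0 ≤ v r) (x : ℝ) : 0 ≤ radialMoment v x := by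
  rw [radialMoment, intervalIntegral.integral_of_le zero_le_one, ← integral_Ico_eq_integral_Ioc]
  exact setIntegral_nonneg measurableSet_Ico fun r hr =>
    mul_nonneg (Real.rpow_nonneg hr.1 x) (hv0 r hr)

theorem radialMoment_antitoneOn (hv : IntervalIntegrable v volume 0 1)
    (hv0 : ∀ r ∈ Ico 0 1, 0 ≤ v r) : AntitoneOn (radialMoment v) (Ici 0) := by
  intro x hx y hy hxy
  refine intervalIntegral.integral_mono_on_of_le_Ioo zero_le_one (intervalIntegrable_rpow_mul hv hy)
    (intervalIntegrable_rpow_mul hv hx) fun r hr => ?_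
  exact mul_le_mul_of_nonneg_right (Real.rpow_le_rpow_of_exponent_ge hr.1 hr.2.le hxy)
    (hv0 r (Ioo_subset_Ico_self hr))

theorem integral_rpow_mul_le_radialMoment (hv : IntervalIntegrable v volume 0 1)
    (hv0 : ∀ r ∈ Ico 0 1, 0 ≤ v r) (hx : 0 ≤ x) {s t : ℝ} (hs : 0 ≤ s) (hst : s ≤ t) (ht : t ≤ 1) :
    ∫ r in s..t, r ^ x * v r ≤ radialMoment v x := by
  refine intervalIntegral.integral_mono_interval hs hst ht ?_ (intervalIntegrable_rpow_mul hv hx)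
  rw [← Measure.restrict_congr_set Ico_ae_eq_Ioc]
  filter_upwards [ae_restrict_mem measurableSet_Ico] with r hr
  exact mul_nonneg (Real.rpow_nonneg hr.1 x) (hv0 r hr)

theorem add_one_mul_radialMoment_tailInt (hω : IntervalIntegrable ω volume 0 1) (hx : 0 ≤ x) :
    (x + 1) * radialMoment (tailInt ω) x = radialMoment ω (x + 1) := by
  have hone : (1 : ℝ) ∈ uIcc 0 1 := right_mem_uIcc
  have hpow : AbsolutelyContinuousOnInterval (fun r : ℝ => r ^ (x + 1)) 0 1 :=
    (Real.contDiff_rpow_const_of_le (n := 1) (by simpa using hx)).contDiffOn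
      |>.absolutelyContinuousOnInterval
  have hparts := hpow.integral_mul_deriv_eq_deriv_mul
    (hω.absolutelyContinuousOnInterval_intervalIntegral hone)
  have hleft : ∫ r in 0..1, r ^ (x + 1) * deriv (fun t => ∫ s in (1 : ℝ)..t, ω s) r =
      radialMoment ω (x + 1) := by
    refine intervalIntegral.integral_congr_ae ?_
    filter_upwards [hω.ae_hasDerivAt_integral] with r hr hmem
    rw [(hr (uIoc_subset_uIcc hmem) 1 hone).deriv]
  have hright : ∫ r in 0..1, deriv (fun r : ℝ => r ^ (x + 1)) r * ∫ s in (1 : ℝ)..r, ω s =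
      -((x + 1) * radialMoment (tailInt ω) x) := by
    rw [radialMoment, ← intervalIntegral.integral_const_mul, ← intervalIntegral.integral_neg]
    refine intervalIntegral.integral_congr fun r _ => ?_
    simp only [tailInt]
    rw [Real.deriv_rpow_const, add_sub_cancel_right,
      intervalIntegral.integral_symm r 1]
    ring
  rw [hleft, hright, intervalIntegral.integral_same, Real.zero_rpow (by positivity)] at hparts
  linarith

theorem one_sub_rpow_le_mul_one_sub {r a : ℝ} (hr : 0 ≤ r) (ha : 1 ≤ a) :
    1 - r ^ a ≤ a * (1 - r) := by
  have := one_add_mul_self_le_rpow_one_add (s := r - 1) (by linarith) ha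
  rw [add_sub_cancel] at this
  linarith

theorem radialMoment_assocW_le_add_tailInt (hω : RadialWeight ω)
    (hint : IntervalIntegrable (assocW ω) volume 0 1) (hx : 0 ≤ x) {a : ℝ} (ha : 1 ≤ a) :
    radialMoment (assocW ω) x ≤
      radialMoment (assocW ω) (x + a) + a * radialMoment (tailInt ω) x := by
  have htail : IntervalIntegrable (tailInt ω) volume 0 1 :=
    (uIcc_of_le (zero_le_one' ℝ) ▸ tailInt_antitoneOn hω).intervalIntegrable
  have hxa := intervalIntegrable_rpow_mul hint (show 0 ≤ x + a by linarith)
  have hxt := (intervalIntegrable_rpow_mul htail hx).const_mul a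
  rw [radialMoment, radialMoment, radialMoment, ← intervalIntegral.integral_const_mul,
    ← intervalIntegral.integral_add hxa hxt]
  refine intervalIntegral.integral_mono_on_of_le_Ioo zero_le_one
    (intervalIntegrable_rpow_mul hint hx) (hxa.add hxt) fun r hr => ?_
  have h1r : 0 < 1 - r := sub_pos.2 hr.2
  have hpos : 0 ≤ r ^ x * assocW ω r :=
    mul_nonneg (Real.rpow_nonneg hr.1.le x) (assocW_nonneg hω (Ioo_subset_Ico_self hr))
  have htail_eq : tailInt ω r = (1 - r) * assocW ω r := (mul_div_cancel₀ _ h1r.ne').symm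
  rw [Real.rpow_add hr.1, htail_eq]
  linarith [mul_le_mul_of_nonneg_left (one_sub_rpow_le_mul_one_sub hr.1.le ha) hpos]

theorem radialMoment_assocW_le_add (hω : RadialWeight ω)
    (hint : IntervalIntegrable (assocW ω) volume 0 1) (hx : 0 < x) {a : ℝ} (ha : 1 ≤ a) :
    radialMoment (assocW ω) x ≤ radialMoment (assocW ω) (x + a) + a / x * radialMoment ω x := by
  have hωint := intervalIntegrable_of_radialWeight hω le_rfl zero_le_one le_rfl
  have htail : radialMoment (tailInt ω) x ≤ radialMoment ω x / x := by
    rw [le_div_iff₀ hx]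
    have htail0 := radialMoment_nonneg (fun r hr => (hω.2.2 r hr).le) x
    have hanti := radialMoment_antitoneOn hωint hω.1 (mem_Ici.2 hx.le)
      (mem_Ici.2 (by linarith)) (le_add_of_nonneg_right zero_le_one)
    linarith [add_one_mul_radialMoment_tailInt hωint hx.le]
  calc radialMoment (assocW ω) x
      ≤ radialMoment (assocW ω) (x + a) + a * radialMoment (tailInt ω) x :=
        radialMoment_assocW_le_add_tailInt hω hint hx.le ha
    _ ≤ radialMoment (assocW ω) (x + a) + a * (radialMoment ω x / x) := by gcongr
    _ = _ := by ring

theorem rpow_sub_le_exp {r ρ : ℝ} (hr : 0 ≤ r) (hrρ : r ≤ ρ) (hxy : x ≤ y) :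
    r ^ (y - x) ≤ Real.exp (-((y - x) * (1 - ρ))) :=
  calc r ^ (y - x) ≤ Real.exp (-(1 - ρ)) ^ (y - x) :=
        Real.rpow_le_rpow hr (by linarith [Real.add_one_le_exp (-(1 - ρ))]) (sub_nonneg.2 hxy)
    _ = _ := by rw [← Real.exp_mul]; congr 1; ring

theorem radialMoment_le_tailInt_add (hω : RadialWeight ω) (hx : 0 ≤ x) (hxy : x ≤ y) {ρ : ℝ}
    (hρ : ρ ∈ Icc 0 1) :
    radialMoment ω y ≤ tailInt ω ρ + Real.exp (-((y - x) * (1 - ρ))) * radialMoment ω x := by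
  have hωint := intervalIntegrable_of_radialWeight hω le_rfl zero_le_one le_rfl
  have hsub₀ : uIcc 0 ρ ⊆ uIcc (0 : ℝ) 1 := uIcc_subset_uIcc_left (Icc_subset_uIcc hρ)
  have hsub₁ : uIcc ρ 1 ⊆ uIcc (0 : ℝ) 1 := uIcc_subset_uIcc_right (Icc_subset_uIcc hρ)
  have hy := intervalIntegrable_rpow_mul hωint (hx.trans hxy)
  have hx' := intervalIntegrable_rpow_mul hωint hx
  have hleft : ∫ r in 0..ρ, r ^ y * ω r ≤
      Real.exp (-((y - x) * (1 - ρ))) * ∫ r in 0..ρ, r ^ x * ω r := by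
    rw [← intervalIntegral.integral_const_mul]
    refine intervalIntegral.integral_mono_on_of_le_Ioo hρ.1 (hy.mono_set hsub₀)
      ((hx'.mono_set hsub₀).const_mul _) fun r hr => ?_
    have hωr := hω.1 r ⟨hr.1.le, hr.2.trans_le hρ.2⟩
    rw [← mul_assoc, ← sub_add_cancel y x, Real.rpow_add hr.1, sub_add_cancel]
    gcongr
    · exact Real.rpow_nonneg hr.1.le x
    · exact rpow_sub_le_exp hr.1.le hr.2.le hxy
  have hright : ∫ r in ρ..1, r ^ y * ω r ≤ tailInt ω ρ :=
    intervalIntegral.integral_mono_on_of_le_Ioo hρ.2 (hy.mono_set hsub₁) (hωint.mono_set hsub₁)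
      fun r hr => mul_le_of_le_one_left (hω.1 r ⟨hρ.1.trans hr.1.le, hr.2⟩)
        (Real.rpow_le_one (hρ.1.trans hr.1.le) hr.2.le (hx.trans hxy))
  rw [radialMoment, ← intervalIntegral.integral_add_adjacent_intervals (hy.mono_set hsub₀)
    (hy.mono_set hsub₁), add_comm]
  refine add_le_add hright (hleft.trans ?_)
  gcongr
  exact integral_rpow_mul_le_radialMoment hωint hω.1 hx le_rfl hρ.1 hρ.2

theorem exp_neg_two_mul_le_rpow {r : ℝ} (hr : 1 / 2 ≤ r) (hr1 : r ≤ 1) (hx : 0 ≤ x) :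
    Real.exp (-(2 * (1 - r) * x)) ≤ r ^ x := by
  have hr0 : 0 < r := by linarith
  have hlog : -(2 * (1 - r)) ≤ Real.log r :=
    calc -(2 * (1 - r)) ≤ 1 - r⁻¹ := by
          have : r⁻¹ ≤ 2 := by rw [inv_le_comm₀ hr0 two_pos]; linarith
          nlinarith [inv_mul_cancel₀ hr0.ne']
      _ ≤ Real.log r := Real.one_sub_inv_le_log_of_pos hr0
  rw [Real.rpow_def_of_pos hr0, ← neg_mul]
  gcongr

theorem tailInt_le_exp_mul_radialMoment (hω : RadialWeight ω) (hx : 0 ≤ x) {r : ℝ}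
    (hr : 1 / 2 ≤ r) (hr1 : r ≤ 1) :
    tailInt ω r ≤ Real.exp (2 * (1 - r) * x) * radialMoment ω x := by
  have hr0 : 0 ≤ r := by linarith
  have hωint := intervalIntegrable_of_radialWeight hω le_rfl zero_le_one le_rfl
  have hsub : uIcc r 1 ⊆ uIcc 0 1 := uIcc_subset_uIcc_right (Icc_subset_uIcc ⟨hr0, hr1⟩)
  calc tailInt ω r ≤ ∫ s in r..1, Real.exp (2 * (1 - r) * x) * (s ^ x * ω s) := by
        refine intervalIntegral.integral_mono_on_of_le_Ioo hr1 (hωint.mono_set hsub)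
          (((intervalIntegrable_rpow_mul hωint hx).mono_set hsub).const_mul _) fun s hs => ?_
        rw [← mul_assoc]
        refine le_mul_of_one_le_left (hω.1 s ⟨hr0.trans hs.1.le, hs.2⟩) ?_
        calc (1 : ℝ) = Real.exp (2 * (1 - r) * x) * Real.exp (-(2 * (1 - r) * x)) := by
              rw [← Real.exp_add, add_neg_cancel, Real.exp_zero]
          _ ≤ Real.exp (2 * (1 - r) * x) * Real.exp (-(2 * (1 - s) * x)) := by
              gcongr; exact hs.1.le
          _ ≤ _ := by gcongr; exact exp_neg_two_mul_le_rpow (hr.trans hs.1.le) hs.2.le hx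
    _ ≤ _ := by
        rw [intervalIntegral.integral_const_mul]
        gcongr
        exact integral_rpow_mul_le_radialMoment hωint hω.1 hx hr0 hr1 le_rfl

theorem integral_inv_one_sub {a b : ℝ} (ha : a < 1) (hb : b < 1) :
    ∫ r in a..b, (1 - r)⁻¹ = Real.log ((1 - a) / (1 - b)) := by
  rw [intervalIntegral.integral_comp_sub_left (fun u => u⁻¹) 1,
    integral_inv_of_pos (sub_pos.2 hb) (sub_pos.2 ha)]

theorem exp_neg_two_le_rpow {r : ℝ} (hx : 2 ≤ x) (hr : 1 - 1 / x ≤ r) (hr1 : r ≤ 1) :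
    Real.exp (-2) ≤ r ^ x := by
  have hx0 : 0 < x := by linarith
  have hhalf : 1 / x ≤ 1 / 2 := one_div_le_one_div_of_le two_pos hx
  have hmul : (1 - r) * x ≤ 1 := by rw [← le_div_iff₀ hx0]; linarith
  refine le_trans ?_ (exp_neg_two_mul_le_rpow (by linarith) hr1 hx0.le)
  gcongr
  linarith

theorem exp_mul_tailInt_mul_log_le_radialMoment_assocW (hω : RadialWeight ω)
    (hint : IntervalIntegrable (assocW ω) volume 0 1) (hx : 2 ≤ x) {a b : ℝ} (ha : 1 - 1 / x ≤ a)
    (hab : a ≤ b) (hb : b < 1) :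
    Real.exp (-2) * tailInt ω b * Real.log ((1 - a) / (1 - b)) ≤ radialMoment (assocW ω) x := by
  have hx0 : 0 ≤ x := by linarith
  have ha0 : 0 ≤ a := by linarith [one_div_le_one_div_of_le two_pos hx]
  have hsub : uIcc a b ⊆ uIcc 0 1 := by
    rw [uIcc_of_le hab, uIcc_of_le zero_le_one]
    exact Icc_subset_Icc ha0 hb.le
  have hinv : IntervalIntegrable (fun r => (1 - r)⁻¹) volume a b :=
    ContinuousOn.intervalIntegrable_of_Icc hab <|
      (continuousOn_const.sub continuousOn_id).inv₀ fun r hr => by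
        simpa [sub_eq_zero] using (hr.2.trans_lt hb).ne'
  rw [← integral_inv_one_sub (hab.trans_lt hb) hb, ← intervalIntegral.integral_const_mul]
  refine le_trans (intervalIntegral.integral_mono_on_of_le_Ioo hab (hinv.const_mul _)
    ((intervalIntegrable_rpow_mul hint hx0).mono_set hsub) fun r hr => ?_)
    (integral_rpow_mul_le_radialMoment hint (fun r hr => assocW_nonneg hω hr) hx0 ha0 hab hb.le)
  have h1r : 0 < 1 - r := by linarith [hr.2]
  have htail : tailInt ω b ≤ tailInt ω r :=
    tailInt_antitoneOn hω ⟨by linarith [hr.1], by linarith⟩ ⟨by linarith, hb.le⟩ hr.2.le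
  have hpos : 0 < tailInt ω b := hω.2.2 b ⟨by linarith, hb⟩
  have hexp : Real.exp (-2) ≤ r ^ x :=
    exp_neg_two_le_rpow hx (ha.trans hr.1.le) (by linarith)
  have hrx : 0 ≤ r ^ x := (Real.exp_pos _).le.trans hexp
  rw [assocW, div_eq_mul_inv, mul_assoc]
  gcongr

end Moments

/-! ### Moments controlled by tails -/

section MomentTail

variable {ω : ℝ → ℝ} {p C : ℝ}

theorem radialMoment_le_two_mul_sq_mul (hω : RadialWeight ω)
    (hint : IntervalIntegrable (assocW ω) volume 0 1) (hp : 0 < p) (hC : 0 < C)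
    (hle : ∀ n : ℕ, 0 < n → radialMoment (assocW ω) (n * p) ≤ C * radialMoment ω (n * p))
    (hge : ∀ n : ℕ, 0 < n → radialMoment ω (n * p) ≤ C * radialMoment (assocW ω) (n * p))
    {n m : ℕ} (hn : 0 < n) (hm : 1 ≤ m * p) (hmn : 2 * C * m ≤ n) :
    radialMoment ω (n * p) ≤ 2 * C ^ 2 * radialMoment ω ((n + m : ℕ) * p) := by
  have hn0 : (0 : ℝ) < n := by exact_mod_cast hn
  have hsmall : C * (m * p / (n * p)) ≤ 1 / 2 := by
    rw [mul_div_mul_right _ _ hp.ne', mul_div_assoc', div_le_iff₀ hn0]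
    linarith
  have hstep : radialMoment ω (n * p) ≤
      C ^ 2 * radialMoment ω ((n + m : ℕ) * p) + 1 / 2 * radialMoment ω (n * p) :=
    calc radialMoment ω (n * p) ≤ C * radialMoment (assocW ω) (n * p) := hge n hn
      _ ≤ C * (radialMoment (assocW ω) ((n + m : ℕ) * p) +
            m * p / (n * p) * radialMoment ω (n * p)) := by
          gcongr
          rw [Nat.cast_add, add_mul]
          exact radialMoment_assocW_le_add hω hint (by positivity) hm
      _ ≤ C * (C * radialMoment ω ((n + m : ℕ) * p) +
            m * p / (n * p) * radialMoment ω (n * p)) := by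
          gcongr
          exact hle (n + m) (by omega)
      _ = C ^ 2 * radialMoment ω ((n + m : ℕ) * p) +
            C * (m * p / (n * p)) * radialMoment ω (n * p) := by ring
      _ ≤ _ := by
          gcongr
          exact radialMoment_nonneg hω.1 _
  linarith

theorem exists_nat_one_le_mul (hp : 0 < p) (hC : 0 < C) {n : ℕ} (hn : 4 * C * (1 + 1 / p) ≤ n) :
    ∃ m : ℕ, 1 ≤ m * p ∧ 2 * C * m ≤ n ∧ (1 + 1 / (4 * C)) * n ≤ (n + m : ℕ) := by
  have hquot : 1 + 1 / p ≤ n / (4 * C) := by rwa [le_div_iff₀' (by positivity)]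
  have hceil := Nat.le_ceil (n / (4 * C))
  have hceil' := Nat.ceil_lt_add_one (show 0 ≤ n / (4 * C) by positivity)
  have : 0 < 1 / p := by positivity
  refine ⟨⌈n / (4 * C)⌉₊, ?_, ?_, ?_⟩
  · rw [← div_le_iff₀ hp]
    linarith
  · rw [← le_div_iff₀' (by positivity)]
    calc (⌈n / (4 * C)⌉₊ : ℝ) ≤ n / (4 * C) + n / (4 * C) := by linarith
      _ = n / (2 * C) := by ring
  · rw [Nat.cast_add, add_mul, one_mul, one_div_mul_eq_div]
    gcongr

theorem exists_pow_mul_le_and_le_pow_mul {w : ℕ → ℝ} {D q N : ℝ} (hD : 0 ≤ D) (hq : 1 ≤ q)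
    (h : ∀ n : ℕ, N ≤ n → ∃ n' : ℕ, q * n ≤ n' ∧ w n ≤ D * w n') (j : ℕ) {n : ℕ} (hn : N ≤ n) :
    ∃ n' : ℕ, q ^ j * n ≤ n' ∧ w n ≤ D ^ j * w n' := by
  induction j with
  | zero => exact ⟨n, by simp, by simp⟩
  | succ j ih =>
    obtain ⟨n₁, hn₁, hw₁⟩ := ih
    have hle : (n : ℝ) ≤ n₁ := (le_mul_of_one_le_left n.cast_nonneg (one_le_pow₀ hq)).trans hn₁
    obtain ⟨n₂, hn₂, hw₂⟩ := h n₁ (hn.trans hle)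
    refine ⟨n₂, ?_, ?_⟩
    · calc q ^ (j + 1) * n = q * (q ^ j * n) := by ring
        _ ≤ q * n₁ := by gcongr
        _ ≤ n₂ := hn₂
    · calc w n ≤ D ^ j * w n₁ := hw₁
        _ ≤ D ^ j * (D * w n₂) := by gcongr
        _ = _ := by ring

theorem tendsto_pow_mul_exp_neg_pow {D q : ℝ} (hD : 0 ≤ D) (hq : 1 < q) :
    Tendsto (fun j : ℕ => D ^ j * Real.exp (-(q ^ j - 1))) atTop (𝓝 0) := by
  obtain ⟨k, hk⟩ := pow_unbounded_of_one_lt D hq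
  have hlim := ((Real.tendsto_pow_mul_exp_neg_atTop_nhds_zero k).comp
    (tendsto_pow_atTop_atTop_of_one_lt hq)).mul_const (Real.exp 1)
  rw [zero_mul] at hlim
  refine squeeze_zero (fun j => by positivity) (fun j => ?_) hlim
  calc D ^ j * Real.exp (-(q ^ j - 1)) ≤ (q ^ k) ^ j * Real.exp (-(q ^ j - 1)) := by gcongr
    _ = (q ^ j) ^ k * Real.exp (-q ^ j) * Real.exp 1 := by
      rw [mul_assoc, ← Real.exp_add, pow_right_comm]
      ring_nf

theorem radialMoment_le_two_mul_tailInt (hω : RadialWeight ω) {x y E Q : ℝ} (hx : 1 ≤ x)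
    (hE : 0 ≤ E) (hQ : 1 ≤ Q) (hQy : Q * x ≤ y) (hle : radialMoment ω x ≤ E * radialMoment ω y)
    (hEQ : E * Real.exp (-(Q - 1)) ≤ 1 / 2) :
    radialMoment ω x ≤ 2 * E * tailInt ω (1 - 1 / x) := by
  have hx0 : 0 < x := by linarith
  have hxy : x ≤ y := (le_mul_of_one_le_left hx0.le hQ).trans hQy
  have hρ : 1 - 1 / x ∈ Icc (0 : ℝ) 1 :=
    ⟨sub_nonneg.2 ((div_le_one hx0).2 hx), sub_le_self 1 (by positivity)⟩
  have hexp : Q - 1 ≤ (y - x) * (1 - (1 - 1 / x)) := by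
    rw [sub_sub_cancel, mul_one_div, le_div_iff₀ hx0]
    linarith
  have habsorb : radialMoment ω x ≤ E * tailInt ω (1 - 1 / x) + 1 / 2 * radialMoment ω x :=
    calc radialMoment ω x
        ≤ E * (tailInt ω (1 - 1 / x) +
            Real.exp (-((y - x) * (1 - (1 - 1 / x)))) * radialMoment ω x) := by
          refine hle.trans ?_
          gcongr
          exact radialMoment_le_tailInt_add hω hx0.le hxy hρ
      _ ≤ E * (tailInt ω (1 - 1 / x) + Real.exp (-(Q - 1)) * radialMoment ω x) := by
          have := radialMoment_nonneg hω.1 x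
          gcongr
      _ = E * tailInt ω (1 - 1 / x) + E * Real.exp (-(Q - 1)) * radialMoment ω x := by ring
      _ ≤ _ := by
          gcongr
          exact radialMoment_nonneg hω.1 x
  linarith

theorem exists_radialMoment_le_mul_tailInt (hω : RadialWeight ω)
    (hint : IntervalIntegrable (assocW ω) volume 0 1) (hp : 0 < p) (hC : 1 ≤ C)
    (hle : ∀ n : ℕ, 0 < n → radialMoment (assocW ω) (n * p) ≤ C * radialMoment ω (n * p))
    (hge : ∀ n : ℕ, 0 < n → radialMoment ω (n * p) ≤ C * radialMoment (assocW ω) (n * p)) :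
    ∃ X A : ℝ, 2 ≤ X ∧ 0 < A ∧ ∀ n : ℕ, X ≤ n * p →
      radialMoment ω (n * p) ≤ A * tailInt ω (1 - 1 / (n * p)) := by
  have hC0 : 0 < C := by linarith
  set q := 1 + 1 / (4 * C)
  have hq1 : 1 < q := lt_add_of_pos_right 1 (by positivity)
  have hgrow : ∀ n : ℕ, 4 * C * (1 + 1 / p) ≤ n → ∃ n' : ℕ, q * n ≤ n' ∧
      radialMoment ω (n * p) ≤ 2 * C ^ 2 * radialMoment ω (n' * p) := by
    intro n hn
    obtain ⟨m, hm, hmn, hqn⟩ := exists_nat_one_le_mul hp hC0 hn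
    have hn0 : (0 : ℝ) < n := lt_of_lt_of_le (by positivity) hn
    exact ⟨n + m, hqn, radialMoment_le_two_mul_sq_mul hω hint hp hC0 hle hge
      (by exact_mod_cast hn0) hm hmn⟩
  obtain ⟨j, hj⟩ := ((tendsto_pow_mul_exp_neg_pow (show 0 ≤ 2 * C ^ 2 by positivity)
    hq1).eventually_le_const one_half_pos).exists
  refine ⟨4 * C * (1 + 1 / p) * p + 2, 2 * (2 * C ^ 2) ^ j, le_add_of_nonneg_left (by positivity),
    by positivity, fun n hn => ?_⟩
  have hnN : 4 * C * (1 + 1 / p) ≤ n := le_of_mul_le_mul_right (by linarith) hp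
  have hx2 : 2 ≤ n * p := le_trans (le_add_of_nonneg_left (by positivity)) hn
  obtain ⟨n', hn', hw⟩ := exists_pow_mul_le_and_le_pow_mul (w := fun n => radialMoment ω (n * p))
    (by positivity) hq1.le hgrow j hnN
  refine radialMoment_le_two_mul_tailInt hω (by linarith) (by positivity) (one_le_pow₀ hq1.le)
    ?_ hw hj
  rw [← mul_assoc]
  gcongr

end MomentTail

/-! ### Necessity -/

section Necessity

variable {ω : ℝ → ℝ} {p : ℝ}

theorem exists_nat_mul_mem_Icc {a δ : ℝ} (ha : 0 ≤ a) (hδ : 0 < δ) :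
    ∃ n : ℕ, n * δ ∈ Icc a (a + δ) := by
  refine ⟨⌈a / δ⌉₊, (div_le_iff₀ hδ).1 (Nat.le_ceil _), ?_⟩
  have hceil : (⌈a / δ⌉₊ : ℝ) ≤ a / δ + 1 := (Nat.ceil_lt_add_one (by positivity)).le
  calc ⌈a / δ⌉₊ * δ ≤ (a / δ + 1) * δ := by gcongr
    _ = a + δ := by field_simp

theorem exists_nat_mul_mul_mem_Icc (hp : 0 < p) {a r : ℝ} (ha : 0 ≤ a) (hr : r ∈ Ico 0 1) :
    ∃ n : ℕ, a ≤ n * p ∧ (1 - r) * (n * p) ∈ Icc a (a + p) := by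
  have h1r : 0 < 1 - r := sub_pos.2 hr.2
  have h1r' : 1 - r ≤ 1 := sub_le_self 1 hr.1
  obtain ⟨n, hn⟩ := exists_nat_mul_mem_Icc ha (mul_pos h1r hp)
  rw [mul_left_comm] at hn
  have hnp : (0 : ℝ) ≤ n * p := by positivity
  exact ⟨n, hn.1.trans (mul_le_of_le_one_left hnp h1r'),
    hn.1, hn.2.trans (by gcongr; exact mul_le_of_le_one_left hp.le h1r')⟩

theorem dhat_of_forall_half_le (hω : RadialWeight ω) {B : ℝ}
    (hB : ∀ r ∈ Ico (1 / 2) 1, tailInt ω r ≤ B * tailInt ω ((1 + r) / 2)) : Dhat ω := by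
  have hanti := tailInt_antitoneOn hω
  have h0 : 0 < tailInt ω 0 := hω.2.2 0 (by norm_num)
  have h34 : 0 < tailInt ω (3 / 4) := hω.2.2 _ (by norm_num)
  have hcases : ∀ r ∈ Ico (0 : ℝ) 1, tailInt ω r ≤
      max B (tailInt ω 0 / tailInt ω (3 / 4)) * tailInt ω ((1 + r) / 2) := by
    intro r hr
    have hpos : 0 < tailInt ω ((1 + r) / 2) := hω.2.2 _ ⟨by linarith [hr.1], by linarith [hr.2]⟩
    rcases le_or_gt (1 / 2) r with hhalf | hhalf
    · exact (hB r ⟨hhalf, hr.2⟩).trans (by gcongr; exact le_max_left _ _)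
    · calc tailInt ω r ≤ tailInt ω 0 := hanti (by norm_num) ⟨hr.1, hr.2.le⟩ hr.1
        _ = tailInt ω 0 / tailInt ω (3 / 4) * tailInt ω (3 / 4) := (div_mul_cancel₀ _ h34.ne').symm
        _ ≤ tailInt ω 0 / tailInt ω (3 / 4) * tailInt ω ((1 + r) / 2) := by
            gcongr
            exact hanti ⟨by linarith [hr.1], by linarith [hr.2]⟩ (by norm_num) (by linarith)
        _ ≤ _ := by gcongr; exact le_max_right _ _
  refine ⟨_, ?_, hcases⟩
  exact le_max_of_le_right ((one_le_div h34).2 (hanti (by norm_num) (by norm_num) (by norm_num)))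

theorem dhat_of_radialMoment_le_tailInt (hω : RadialWeight ω) (hp : 0 < p) {X A : ℝ} (hX : 2 ≤ X)
    (hA : 0 < A)
    (h : ∀ n : ℕ, X ≤ n * p → radialMoment ω (n * p) ≤ A * tailInt ω (1 - 1 / (n * p))) :
    Dhat ω := by
  refine dhat_of_forall_half_le hω (B := Real.exp (2 * (X + p)) * A) fun r hr => ?_
  obtain ⟨n, hn, hXn, hnX⟩ := exists_nat_mul_mul_mem_Icc hp (zero_le_two.trans hX)
    ⟨by linarith [hr.1], hr.2⟩
  have hx : 0 < n * p := by linarith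
  have htail : tailInt ω (1 - 1 / (n * p)) ≤ tailInt ω ((1 + r) / 2) := by
    have hle : 1 / (n * p) ≤ (1 - r) / 2 := by rw [div_le_iff₀ hx]; linarith
    refine tailInt_antitoneOn hω ⟨by linarith [hr.1], by linarith [hr.2]⟩
      ⟨by linarith [hr.1], sub_le_self 1 (by positivity)⟩ (by linarith)
  have hexp : 2 * (1 - r) * (n * p) ≤ 2 * (X + p) := by linarith
  have hmoment : radialMoment ω (n * p) ≤ A * tailInt ω ((1 + r) / 2) :=
    (h n hn).trans (by gcongr)
  calc tailInt ω r ≤ Real.exp (2 * (1 - r) * (n * p)) * radialMoment ω (n * p) :=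
        tailInt_le_exp_mul_radialMoment hω hx.le hr.1 hr.2.le
    _ ≤ Real.exp (2 * (X + p)) * (A * tailInt ω ((1 + r) / 2)) :=
        mul_le_mul (Real.exp_le_exp.2 hexp) hmoment (radialMoment_nonneg hω.1 _) (Real.exp_pos _).le
    _ = _ := by ring

theorem dcheck_of_radialMoment_le_tailInt (hω : RadialWeight ω)
    (hint : IntervalIntegrable (assocW ω) volume 0 1) (hp : 0 < p) {X A : ℝ} (hX : 2 ≤ X)
    (hA : 0 < A)
    (h : ∀ n : ℕ, X ≤ n * p → radialMoment (assocW ω) (n * p) ≤ A * tailInt ω (1 - 1 / (n * p))) :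
    Dcheck ω := by
  set L := Real.exp (2 * A * Real.exp 2) with hL
  have hL1 : 1 < L := Real.one_lt_exp_iff.2 (by positivity)
  have hK : 1 < (X + p) * L := by nlinarith
  refine ⟨(X + p) * L, 2, hK, one_lt_two, fun r hr => ?_⟩
  obtain ⟨n, hn, hXn, hnX⟩ := exists_nat_mul_mul_mem_Icc hp (zero_le_two.trans hX) hr
  set x := n * p
  set b := 1 - (1 - r) / ((X + p) * L) with hb
  have hx : 0 < x := by linarith
  have h1r : 0 < 1 - r := sub_pos.2 hr.2
  have hrx : 1 / x ≤ 1 - r := by rw [div_le_iff₀ hx]; linarith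
  have hle : (1 - r) / ((X + p) * L) * L ≤ 1 / x := by
    rw [div_mul_eq_mul_div, mul_div_mul_right _ _ (by positivity),
      div_le_div_iff₀ (by linarith) hx]
    linarith
  have hb1 : b < 1 := sub_lt_self 1 (by positivity)
  have hxb : 1 - 1 / x ≤ b := by
    refine sub_le_sub_left (le_trans (le_mul_of_one_le_right (by positivity) hL1.le) hle) 1
  have hlog : Real.log L ≤ Real.log ((1 - (1 - 1 / x)) / (1 - b)) := by
    gcongr
    rw [le_div_iff₀ (sub_pos.2 hb1), hb, sub_sub_cancel, sub_sub_cancel, mul_comm]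
    exact hle
  have hpos : 0 < tailInt ω b := hω.2.2 b ⟨by linarith [hr.1], hb1⟩
  have hchain : A * (2 * tailInt ω b) ≤ A * tailInt ω r :=
    calc A * (2 * tailInt ω b) = Real.exp (-2) * tailInt ω b * Real.log L := by
          rw [hL, Real.log_exp, Real.exp_neg]
          field_simp
      _ ≤ Real.exp (-2) * tailInt ω b * Real.log ((1 - (1 - 1 / x)) / (1 - b)) := by gcongr
      _ ≤ radialMoment (assocW ω) x :=
          exp_mul_tailInt_mul_log_le_radialMoment_assocW hω hint (hX.trans hn) le_rfl hxb hb1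
      _ ≤ A * tailInt ω (1 - 1 / x) := h n hn
      _ ≤ A * tailInt ω r := by
          gcongr
          exact tailInt_antitoneOn hω ⟨hr.1, hr.2.le⟩
            ⟨by linarith [hr.1], sub_le_self 1 (by positivity)⟩ (by linarith)
  exact le_of_mul_le_mul_left hchain hA

theorem Mpp_pow (p : ℝ) (n : ℕ) {s : ℝ} (hs : 0 ≤ s) :
    Mpp p (fun z => z ^ n) s = s ^ (n * p) * Mpp p (fun z => z ^ n) 1 := by
  have hre (θ : ℝ) : |(((s : ℂ) * Complex.exp (θ * Complex.I)) ^ n).re| ^ p =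
      s ^ (n * p) * |(((1 : ℝ) * Complex.exp (θ * Complex.I)) ^ n).re| ^ p := by
    rw [Complex.ofReal_one, one_mul, mul_pow, ← Complex.ofReal_pow, Complex.re_ofReal_mul, abs_mul,
      abs_of_nonneg (pow_nonneg hs n), Real.mul_rpow (pow_nonneg hs n) (abs_nonneg _),
      Real.rpow_natCast_mul hs]
  simp only [Mpp, hre, intervalIntegral.integral_const_mul]
  ring

theorem Mpp_pow_one_pos (hp : 0 < p) (n : ℕ) : 0 < Mpp p (fun z => z ^ n) 1 := by
  refine mul_pos (by positivity) (intervalIntegral.integral_pos Real.two_pi_pos ?_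
    (fun θ _ => by positivity) ⟨0, ⟨le_rfl, Real.two_pi_pos.le⟩, by simp⟩)
  exact Continuous.continuousOn (.rpow_const (by fun_prop) fun _ => Or.inr hp.le)

theorem supMpp_pow (hp : 0 < p) {n : ℕ} (hn : 0 < n) {r : ℝ} (hr : 0 ≤ r) :
    supMpp p (fun z => z ^ n) r = r ^ (n * p) * Mpp p (fun z => z ^ n) 1 := by
  have hx : 0 < n * p := by positivity
  have hpos := Mpp_pow_one_pos hp n
  have hcongr : (fun s => Mpp p (fun z => z ^ n) s) '' Ioo 0 r =
      (fun s => s ^ (n * p) * Mpp p (fun z => z ^ n) 1) '' Ioo 0 r :=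
    image_congr fun s hs => Mpp_pow p n hs.1.le
  rw [supMpp, hcongr]
  rcases hr.eq_or_lt with rfl | hr
  · simp [Real.zero_rpow hx.ne']
  refine IsLUB.csSup_eq ?_ ((nonempty_Ioo.2 hr).image _)
  refine (isLUB_Ioo hr).isLUB_of_tendsto (fun s hs t _ hst => ?_) (nonempty_Ioo.2 hr) ?_
  · have := hs.1
    gcongr
  · exact ((Real.continuous_rpow_const hx.le).mul_const _).continuousWithinAt

theorem integral_supMpp_pow_mul (hp : 0 < p) {n : ℕ} (hn : 0 < n) (v : ℝ → ℝ) :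
    ∫ r in 0..1, supMpp p (fun z => z ^ n) r * v r =
      Mpp p (fun z => z ^ n) 1 * radialMoment v (n * p) := by
  rw [radialMoment, ← intervalIntegral.integral_const_mul]
  refine intervalIntegral.integral_congr fun r hr => ?_
  rw [uIcc_of_le zero_le_one] at hr
  rw [supMpp_pow hp hn hr.1]
  ring

theorem radialMoment_le_of_integral_supMpp_pow_le (hp : 0 < p) {n : ℕ} (hn : 0 < n) {v w : ℝ → ℝ}
    {C : ℝ} (h : ∫ r in 0..1, supMpp p (fun z => z ^ n) r * v r ≤
      C * ∫ r in 0..1, supMpp p (fun z => z ^ n) r * w r) :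
    radialMoment v (n * p) ≤ C * radialMoment w (n * p) := by
  rw [integral_supMpp_pow_mul hp hn, integral_supMpp_pow_mul hp hn, mul_left_comm] at h
  exact le_of_mul_le_mul_left h (Mpp_pow_one_pos hp n)

theorem dhat_and_dcheck_of_integral_supMpp_pow_le (hp : 0 < p) (hω : RadialWeight ω)
    (hint : IntegrableOn (assocW ω) (Ico 0 1)) {C : ℝ} (hC : 1 ≤ C)
    (hle : ∀ n : ℕ, 0 < n → ∫ r in 0..1, supMpp p (fun z => z ^ n) r * assocW ω r ≤
      C * ∫ r in 0..1, supMpp p (fun z => z ^ n) r * ω r)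
    (hge : ∀ n : ℕ, 0 < n → ∫ r in 0..1, supMpp p (fun z => z ^ n) r * ω r ≤
      C * ∫ r in 0..1, supMpp p (fun z => z ^ n) r * assocW ω r) :
    Dhat ω ∧ Dcheck ω := by
  have hint' : IntervalIntegrable (assocW ω) volume 0 1 :=
    (intervalIntegrable_iff_integrableOn_Ico_of_le zero_le_one).2 hint
  have hle' := fun n hn => radialMoment_le_of_integral_supMpp_pow_le hp hn (hle n hn)
  have hge' := fun n hn => radialMoment_le_of_integral_supMpp_pow_le hp hn (hge n hn)
  obtain ⟨X, A, hX, hA, h⟩ := exists_radialMoment_le_mul_tailInt hω hint' hp hC hle' hge'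
  refine ⟨dhat_of_radialMoment_le_tailInt hω hp hX hA h,
    dcheck_of_radialMoment_le_tailInt hω hint' hp hX (A := C * A) (by positivity) fun n hn => ?_⟩
  have hn0 : 0 < n := Nat.pos_of_ne_zero fun h0 => by simp [h0] at hn; linarith
  calc radialMoment (assocW ω) (n * p) ≤ C * radialMoment ω (n * p) := hle' n hn0
    _ ≤ C * (A * tailInt ω (1 - 1 / (n * p))) := by gcongr; exact h n hn
    _ = _ := by ring

end Necessity

/-- For `0 < p < ∞` and a radial weight `ω`, the following holds iff
`ω ∈ D = D̂ ∩ Ď`: `ω̃` is a weight and there is `C ≥ 1` such that, for every analytic `f`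
on `𝔻` with `Im f(0) = 0`, the three quantities `‖f‖_{A^p_ω}^p`,
`∫_0^1 (sup_{0<s<r} M_p^p(s,Re f)) ω̃(r) dr` and `∫_0^1 (sup_{0<s<r} M_p^p(s,Re f)) ω(r) dr`
are pairwise comparable with constant `C`. -/
theorem statement8 (p : ℝ) (hp : 0 < p) (ω : ℝ → ℝ) (hω : RadialWeight ω) :
    (MeasureTheory.IntegrableOn (assocW ω) (Set.Ico 0 1) ∧
      ∃ C : ℝ, 1 ≤ C ∧ ∀ f : ℂ → ℂ, DifferentiableOn ℂ f (Metric.ball (0:ℂ) 1) →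
        (f 0).im = 0 →
        (ApNorm p ω f ≤ C * ∫ r in (0:ℝ)..1, supMpp p f r * assocW ω r) ∧
        ((∫ r in (0:ℝ)..1, supMpp p f r * assocW ω r) ≤ C * ApNorm p ω f) ∧
        (ApNorm p ω f ≤ C * ∫ r in (0:ℝ)..1, supMpp p f r * ω r) ∧
        ((∫ r in (0:ℝ)..1, supMpp p f r * ω r) ≤ C * ApNorm p ω f) ∧
        ((∫ r in (0:ℝ)..1, supMpp p f r * assocW ω r) ≤
            C * ∫ r in (0:ℝ)..1, supMpp p f r * ω r) ∧
        ((∫ r in (0:ℝ)..1, supMpp p f r * ω r) ≤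
            C * ∫ r in (0:ℝ)..1, supMpp p f r * assocW ω r)) ↔
      (Dhat ω ∧ Dcheck ω) := by
  constructor
  · rintro ⟨hint, C, hC, h⟩
    have hpow (n : ℕ) (hn : 0 < n) := h (fun z => z ^ n) (by fun_prop) (by simp [hn.ne'])
    exact dhat_and_dcheck_of_integral_supMpp_pow_le hp hω hint hC
      (fun n hn => (hpow n hn).2.2.2.2.1) fun n hn => (hpow n hn).2.2.2.2.2
  · rintro ⟨hhat, hcheck⟩
    have hcomp : ∀ k, ComparableOn analyticRealAtZero
        (![bergmanLInt p ω, supLInt p (assocW ω), supLInt p ω] k) (supDyadSum p ω) :=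
      Fin.forall_fin_succ.2 ⟨comparableOn_bergmanLInt_supDyadSum hp hω hhat hcheck,
        Fin.forall_fin_two.2 ⟨comparableOn_supLInt_assocW_supDyadSum hω hhat _,
          comparableOn_supLInt_supDyadSum hω hhat hcheck _⟩⟩
    obtain ⟨C, hC, hle⟩ := exists_toReal_le_of_comparableOn hcomp
    refine ⟨integrableOn_assocW hω hhat hcheck, C, hC, fun f hf hf0 => ?_⟩
    rw [ApNorm_eq_toReal hp hω hf.continuousOn,
      integral_supMpp_mul_eq_toReal hp hf (aemeasurable_assocW hω) fun r hr => assocW_nonneg hω hr,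
      integral_supMpp_mul_eq_toReal hp hf hω.2.1.aestronglyMeasurable.aemeasurable hω.1]
    have hle' := fun j k => hle j k f ⟨hf, hf0⟩
    exact ⟨hle' 0 1, hle' 1 0, hle' 0 2, hle' 2 0, hle' 1 2, hle' 2 1⟩
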